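/- arXiv:1710.04865 — 4 statements merged into one kernel-verified Lean document; each statement's English description precedes it below -/
import Mathlib

section
/- Let m and p be positive integers and set l = 4mp+1, t = 4mp−2p+1, p' = 2mp. Let s and k be integers with 0 ≤ s ≤ 2m−1 and sp+1 ≤ k ≤ (s+1)p. Then i_k = 2m(p−k) + m + 1 + (s/2)(4mp+1) if s is even, and i_k = 2m(k−p) − m − ((s−1)/2)(4mp+1) if s is odd. -/
open Finset

noncomputable section

/-- The q-Pochhammer symbol `(a; q)_n = ∏_{k=0}^{n-1} (1 - a q^k)`. -/
def qPoch (a q : ℂ) (n : ℕ) : ℂ := ∏ k ∈ Finset.range n, (1 - a * q ^ k)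

/-- The Gaussian binomial coefficient `[n; k]_q` as a polynomial in `q` over `ℤ`,
defined by the q-Pascal rule `[n; k] = [n-1; k-1] + q^k [n-1; k]`.  It is the
polynomial equal to `(q;q)_n / ((q;q)_{n-k} (q;q)_k)`. -/
def gaussPoly : ℕ → ℕ → Polynomial ℤ
  | _, 0 => 1
  | 0, _ + 1 => 0
  | n + 1, k + 1 => gaussPoly n k + Polynomial.X ^ (k + 1) * gaussPoly n (k + 1)

/-- The Gaussian binomial coefficient `[n; k]_q` evaluated at `q : ℂ`. -/
def gbin (q : ℂ) (n k : ℕ) : ℂ := Polynomial.aeval q (gaussPoly n k)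

/-- `σ_j = (-1)^⌊(2j-1)t/l⌋`. -/
def sigmaT (l t j : ℕ) : ℤ := (-1) ^ ((2 * j - 1) * t / l)

/-- `r(j)`: the unique integer with `r(j) ≡ (2j-1)t (mod 2l)` and `-l < r(j) < l`. -/
def rT (l t j : ℕ) : ℤ :=
  if (((2 * j - 1) * t % (2 * l) : ℕ) : ℤ) < (l : ℤ) then (((2 * j - 1) * t % (2 * l) : ℕ) : ℤ)
  else (((2 * j - 1) * t % (2 * l) : ℕ) : ℤ) - 2 * (l : ℤ)

/-- `r'(j) = (|r(j)| + 1)/2`. -/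
def rpT (l t j : ℕ) : ℕ := ((rT l t j).natAbs + 1) / 2

open Classical in
/-- `i_k`: the unique `j ∈ {1, …, (l-1)/2}` with `r'(j) = k`. -/
def iT (l t k : ℕ) : ℕ :=
  if h : ∃ j, j ∈ Finset.Icc 1 ((l - 1) / 2) ∧ rpT l t j = k then h.choose else 0

/-- `ε_{i,j,m}`: `1` if `j ≡ -i, -i-1 (mod 2m)`, `-1` if `j ≡ i, i-1 (mod 2m)`,
`0` otherwise (and `0` when `m ∣ i`, a case excluded in all uses). -/
def epsLO (m i j : ℕ) : ℤ :=
  if m ∣ i then 0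
  else if 2 * m ∣ (i + j) ∨ 2 * m ∣ (i + j + 1) then 1
  else if (2 * (m : ℤ)) ∣ ((j : ℤ) - (i : ℤ)) ∨ (2 * (m : ℤ)) ∣ ((j : ℤ) - (i : ℤ) + 1) then -1
  else 0

/-- `Δ_{i,j,m}`: `1` if `j ≡ -i, -i+1 (mod 2m)`, `-1` if `j ≡ i, i+1 (mod 2m)`,
`0` otherwise (and `0` when `m ∣ i`, a case excluded in all uses). -/
def deltaLO (m i j : ℕ) : ℤ :=
  if m ∣ i then 0
  else if 2 * m ∣ (i + j) ∨ 2 * m ∣ (i + j - 1) then 1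
  else if (2 * (m : ℤ)) ∣ ((j : ℤ) - (i : ℤ)) ∨ (2 * (m : ℤ)) ∣ ((j : ℤ) - (i : ℤ) - 1) then -1
  else 0

/-- `γ_{i,m} = 1` if `i ≡ 1, …, m-1 (mod 2m)` and `-1` otherwise. -/
def gamLO (m i : ℕ) : ℤ :=
  if 1 ≤ i % (2 * m) ∧ i % (2 * m) ≤ m - 1 then 1 else -1

/-- `β_{i,m} = 1` if `i ≡ 1, …, m-1 (mod 2m)`, `-1` if `i ≡ m+1, …, 2m-1 (mod 2m)`,
and `0` if `m ∣ i`. -/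
def betLO (m i : ℕ) : ℤ :=
  if 1 ≤ i % (2 * m) ∧ i % (2 * m) ≤ m - 1 then 1
  else if m + 1 ≤ i % (2 * m) ∧ i % (2 * m) ≤ 2 * m - 1 then -1
  else 0

/-- Extend a tuple `f : Fin P → Fin N` to `n : ℕ → ℕ` with `n i = f (i-1)` for
`1 ≤ i ≤ P` and `n i = 0` otherwise (in particular `n 0 = 0`). -/
def extTup (P N : ℕ) (f : Fin P → Fin N) : ℕ → ℕ :=
  fun i => if h : 1 ≤ i ∧ i ≤ P then (f ⟨i - 1, by omega⟩ : ℕ) else 0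

/-- Takata's exponent `a(n)` (an integer; every integer division below is exact). -/
def aT (l t : ℕ) (n : ℕ → ℕ) : ℤ :=
  -(∑ j ∈ Icc 1 ((l - 1) / 2), (∑ k ∈ Icc (rpT l t j) ((l - 1) / 2),
      (sigmaT l t (iT l t k) + sigmaT l t (iT l t ((l - 1) / 2 + 1 - k))) / 2) *
      ((n j : ℤ) - (n (j - 1) : ℤ)))
  - ∑ j ∈ Icc 1 ((l - 1) / 2 - 1), ((sigmaT l t (j + 1) + sigmaT l t ((l - 1) / 2 + 1 - j)) / 2) * (n j : ℤ)
  - ((sigmaT l t ((l - 1) / 2) + 1) / 2) * (n ((l - 1) / 2) : ℤ)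
  - ∑ j ∈ Icc 1 ((l - 1) / 2), sigmaT l t j

/-- Takata's exponent `b₁(n)` (an integer; every integer division below is exact
whenever the factor it multiplies is nonzero). -/
def b1T (l t : ℕ) (n : ℕ → ℕ) : ℤ :=
  -aT l t n
  + ∑ k ∈ Icc 1 ((l - t) / 2), ((1 - sigmaT l t (iT l t k)) / 2) * (n (iT l t k - 1) : ℤ)
  - ∑ k ∈ Icc ((l - t) / 2 + 1) ((l - 1) / 2), (n (iT l t k - 1) : ℤ)
  + ∑ k ∈ Icc ((l - t) / 2 + 1) ((l - 1) / 2), ((1 + sigmaT l t (iT l t k)) / 2) * (n (iT l t k) : ℤ)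
  - (1 + sigmaT l t ((l - 1) / 2)) * (n ((l - 1) / 2) : ℤ)
  + ∑ j ∈ Icc 1 ((l - 1) / 2 - 1), ((sigmaT l t (j + 1) - sigmaT l t j) / 2) * (n j : ℤ)
  - ∑ k ∈ Icc 1 ((l - 1) / 2 - 1), ∑ k' ∈ Icc (k + 1) ((l - 1) / 2),
      ((1 + Int.sign ((iT l t k : ℤ) - (iT l t k' : ℤ))) / 2) *
        ((sigmaT l t (iT l t k) - sigmaT l t (iT l t k')) / 2) *
        ((n (iT l t k) : ℤ) - (n (iT l t k - 1) : ℤ)) *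
        ((n (iT l t k') : ℤ) - (n (iT l t k' - 1) : ℤ))
  + ∑ j ∈ Icc 1 ((l - 1) / 2), sigmaT l t j *
      (∑ k ∈ Icc 1 (rpT l t j), ((n (iT l t k) : ℤ) - (n (iT l t k - 1) : ℤ))) * (n (j - 1) : ℤ)

/-- Takata's exponent `b₂(n)`. -/
def b2T (l t : ℕ) (n : ℕ → ℕ) : ℤ :=
  if l < 2 * t then
    ∑ k ∈ Icc ((l - t) / 2 + 1) ((t - 1) / 2),
      ((1 + sigmaT l t (iT l t k)) / 2) * (n (iT l t k - 1) : ℤ)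
  else
    -∑ k ∈ Icc ((t + 1) / 2 + 1) ((l - t) / 2),
      ((1 + sigmaT l t (iT l t k)) / 2) * (n (iT l t k - 1) : ℤ)

/-- Takata's `κ(p')`. -/
def kapT (l t N : ℕ) (n : ℕ → ℕ) : ℤ :=
  if sigmaT l t ((l - 1) / 2) = -1 then -(N : ℤ) * (n ((l - 1) / 2) : ℤ) else 0

/-- Takata's `τ(j)`. -/
def tauT (l t : ℕ) (q : ℂ) (n : ℕ → ℕ) (j : ℕ) : ℂ :=
  if sigmaT l t j = -1 then (-1 : ℂ) ^ (n j - n (j - 1))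
  else q ^ ((((n j : ℤ) - (n (j - 1) : ℤ)) * (((n j : ℤ) - (n (j - 1) : ℤ)) + 1)) / 2)

/-- Takata's `X(n)`. -/
def XT (l t N : ℕ) (q : ℂ) (n : ℕ → ℕ) : ℂ :=
  (-1 : ℂ) ^ (n ((l - 1) / 2)) * q ^ kapT l t N n *
    (qPoch q q (N - 1) * qPoch q q (n ((l - 1) / 2)) / qPoch q q (N - n ((l - 1) / 2) - 1)) *
    ∏ j ∈ Icc 1 ((l - 1) / 2), tauT l t q n j / qPoch q q (n j - n (j - 1))

theorem two_mul_dvd_sub_rT (l t j : ℕ) (hj : 1 ≤ j) :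
    (2 * (l : ℤ)) ∣ (2 * (j : ℤ) - 1) * t - rT l t j := by
  have h := Nat.div_add_mod ((2 * j - 1) * t) (2 * l)
  have hc : (((2 * j - 1) * t : ℕ) : ℤ) = (2 * (j : ℤ) - 1) * t := by
    push_cast [Nat.cast_sub (show 1 ≤ 2 * j by omega)]
    ring
  have hZ : (((2 * j - 1) * t : ℕ) : ℤ) = 2 * l * (((2 * j - 1) * t / (2 * l) : ℕ) : ℤ)
      + (((2 * j - 1) * t % (2 * l) : ℕ) : ℤ) := by exact_mod_cast h.symm
  rw [← hc]
  unfold rT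
  split_ifs
  · exact ⟨(((2 * j - 1) * t / (2 * l) : ℕ) : ℤ), by linear_combination hZ⟩
  · exact ⟨(((2 * j - 1) * t / (2 * l) : ℕ) : ℤ) + 1, by linear_combination hZ⟩

theorem rT_mem_Ico (l t j : ℕ) (hl : 0 < l) : -(l : ℤ) ≤ rT l t j ∧ rT l t j < l := by
  have h := Nat.mod_lt ((2 * j - 1) * t) (show 0 < 2 * l by omega)
  unfold rT
  split_ifs <;> omega

theorem rT_eq_of_dvd {l t j : ℕ} {r : ℤ} (hj : 1 ≤ j) (h1 : -(l : ℤ) < r) (h2 : r < l)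
    (h : (2 * (l : ℤ)) ∣ (2 * (j : ℤ) - 1) * t - r) : rT l t j = r := by
  have hb := rT_mem_Ico l t j (by omega)
  have hd := dvd_sub h (two_mul_dvd_sub_rT l t j hj)
  have h0 := Int.eq_zero_of_abs_lt_dvd hd (by rw [abs_lt]; constructor <;> linarith)
  linarith

theorem odd_rT {l t j : ℕ} (hj : 1 ≤ j) (ht : Odd t) : Odd (rT l t j) := by
  obtain ⟨c, hc⟩ := two_mul_dvd_sub_rT l t j hj
  obtain ⟨u, rfl⟩ := ht
  refine ⟨(2 * (j : ℤ) - 1) * u + j - 1 - l * c, ?_⟩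
  push_cast at hc
  linarith

theorem rpT_injOn {l t : ℕ} (hl : Odd l) (ht : Odd t) (hlt : IsCoprime (l : ℤ) (t : ℤ)) :
    Set.InjOn (rpT l t) (Set.Icc 1 ((l - 1) / 2)) := by
  intro i hi j hj hij
  obtain ⟨hi1, hi2⟩ := hi
  obtain ⟨hj1, hj2⟩ := hj
  have habs : (rT l t i).natAbs = (rT l t j).natAbs := by
    obtain ⟨a, ha⟩ := odd_rT (l := l) hi1 ht
    obtain ⟨b, hb⟩ := odd_rT (l := l) hj1 ht
    unfold rpT at hij
    omega
  obtain ⟨c, hc⟩ := dvd_trans (dvd_mul_left (l : ℤ) 2) (two_mul_dvd_sub_rT l t i hi1)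
  obtain ⟨d, hd⟩ := dvd_trans (dvd_mul_left (l : ℤ) 2) (two_mul_dvd_sub_rT l t j hj1)
  have hl2 : IsCoprime (l : ℤ) 2 := by
    obtain ⟨a, rfl⟩ := hl
    exact ⟨1, -a, by push_cast; ring⟩
  rcases Int.natAbs_eq_natAbs_iff.mp habs with h | h
  · have hdvd : (l : ℤ) ∣ ((i : ℤ) - j) * 2 * t :=
      ⟨c - d, by linear_combination hc - hd + h⟩
    have h0 := Int.eq_zero_of_abs_lt_dvd
      (hl2.dvd_of_dvd_mul_right (hlt.dvd_of_dvd_mul_right hdvd))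
      (by rw [abs_lt]; omega)
    omega
  · have hdvd : (l : ℤ) ∣ ((i : ℤ) + j - 1) * 2 * t :=
      ⟨c + d, by linear_combination hc + hd + h⟩
    have h0 := Int.eq_zero_of_abs_lt_dvd
      (hl2.dvd_of_dvd_mul_right (hlt.dvd_of_dvd_mul_right hdvd))
      (by rw [abs_lt]; omega)
    omega

theorem iT_eq_of_rpT_eq {l t k j : ℕ} (hl : Odd l) (ht : Odd t)
    (hlt : IsCoprime (l : ℤ) (t : ℤ)) (hj : j ∈ Finset.Icc 1 ((l - 1) / 2))
    (h : rpT l t j = k) : iT l t k = j := by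
  have hex : ∃ j, j ∈ Finset.Icc 1 ((l - 1) / 2) ∧ rpT l t j = k := ⟨j, hj, h⟩
  unfold iT
  rw [dif_pos hex]
  obtain ⟨h1, h2⟩ := hex.choose_spec
  exact rpT_injOn hl ht hlt (Finset.mem_Icc.mp h1) (Finset.mem_Icc.mp hj) (h2.trans h.symm)

/-- `i_k = J` as soon as `(2J-1)t ≡ ±(2k-1) (mod 2l)` with `J` and `k` in range. -/
theorem iT_eq_of_dvd {l t k : ℕ} {J : ℤ} (hl : Odd l) (ht : Odd t)
    (hlt : IsCoprime (l : ℤ) (t : ℤ)) (hk1 : 1 ≤ k) (hk2 : 2 * k < l)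
    (hJ1 : 1 ≤ J) (hJ2 : 2 * J < l)
    (h : (2 * (l : ℤ)) ∣ (2 * J - 1) * t - (2 * k - 1) ∨
      (2 * (l : ℤ)) ∣ (2 * J - 1) * t - -(2 * k - 1)) : (iT l t k : ℤ) = J := by
  lift J to ℕ using by omega
  norm_cast
  refine iT_eq_of_rpT_eq hl ht hlt (Finset.mem_Icc.mpr ⟨by omega, by omega⟩) ?_
  unfold rpT
  rcases h with h | h <;>
    rw [rT_eq_of_dvd (by omega) (by omega) (by omega) h] <;> omega

/-- Lemma 2.4(ii): for `l = 4mp+1`, `t = 4mp-2p+1`, the explicit value of `i_k`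
on the interval `sp+1 ≤ k ≤ (s+1)p`. -/
theorem iT_formula_neg_pos
    (m p s k : ℕ) (hm : 0 < m) (hp : 0 < p)
    (hs : s ≤ 2 * m - 1) (hk1 : s * p + 1 ≤ k) (hk2 : k ≤ (s + 1) * p) :
    (iT (4 * m * p + 1) (4 * m * p - 2 * p + 1) k : ℤ)
      = if s % 2 = 0 then
          2 * (m : ℤ) * ((p : ℤ) - (k : ℤ)) + (m : ℤ) + 1
            + ((s / 2 : ℕ) : ℤ) * (4 * (m : ℤ) * (p : ℤ) + 1)
        else
          2 * (m : ℤ) * ((k : ℤ) - (p : ℤ)) - (m : ℤ)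
            - (((s - 1) / 2 : ℕ) : ℤ) * (4 * (m : ℤ) * (p : ℤ) + 1) := by
  obtain ⟨t, ht⟩ : ∃ t, t = 4 * m * p - 2 * p + 1 := ⟨_, rfl⟩
  have hmp : p ≤ m * p := Nat.le_mul_of_pos_left p hm
  have htZ : (t : ℤ) = 4 * m * p - 2 * p + 1 := by
    have : 2 * p ≤ 4 * m * p := by nlinarith
    rw [ht]
    push_cast [Nat.cast_sub this]
    ring
  have hlodd : Odd (4 * m * p + 1) := ⟨2 * m * p, by ring⟩
  have htodd : Odd t := by
    rw [← Int.odd_coe_nat, htZ]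
    exact ⟨2 * m * p - p, by ring⟩
  have hcop : IsCoprime ((4 * m * p + 1 : ℕ) : ℤ) (t : ℤ) :=
    ⟨-(2 * m - 1), 2 * m, by rw [htZ]; push_cast; ring⟩
  have hkl : 2 * k < 4 * m * p + 1 := by
    have : (s + 1) * p ≤ 2 * m * p := Nat.mul_le_mul_right p (by omega)
    nlinarith
  rw [← ht]
  have hk1Z : (s : ℤ) * p + 1 ≤ k := by exact_mod_cast hk1
  have hk2Z : (k : ℤ) ≤ (s + 1) * p := by exact_mod_cast hk2
  have hmZ : (0 : ℤ) ≤ 2 * m := by positivity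
  split_ifs with hpar
  · obtain ⟨a, rfl⟩ : ∃ a, s = 2 * a := ⟨s / 2, by omega⟩
    rw [show 2 * a / 2 = a by omega]
    have ham : (a : ℤ) + 1 ≤ m := by omega
    push_cast at hk1Z hk2Z
    have hlow := mul_le_mul_of_nonneg_left hk2Z hmZ
    have hupp := mul_le_mul_of_nonneg_left hk1Z hmZ
    refine iT_eq_of_dvd hlodd htodd hcop (by omega) hkl (by nlinarith) (by push_cast; nlinarith)
      (Or.inr ?_)
    refine ⟨m * (2 * (p - k) + 1) + a * t - (p - k), ?_⟩
    rw [htZ]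
    push_cast
    ring
  · obtain ⟨a, rfl⟩ : ∃ a, s = 2 * a + 1 := ⟨s / 2, by omega⟩
    rw [show (2 * a + 1 - 1) / 2 = a by omega]
    have ham : (a : ℤ) + 1 ≤ m := by omega
    push_cast at hk1Z hk2Z
    have hlow := mul_le_mul_of_nonneg_left hk1Z hmZ
    have hupp := mul_le_mul_of_nonneg_left hk2Z hmZ
    refine iT_eq_of_dvd hlodd htodd hcop (by omega) hkl (by nlinarith) (by push_cast; nlinarith)
      (Or.inl ?_)
    refine ⟨m * (2 * (k - p) - 1) - a * t - (k - p), ?_⟩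
    rw [htZ]
    push_cast
    ring

end
end

section
/- Let m and p be positive integers and set l = 4mp+1, t = 4mp−2p+1, p' = 2mp. Then for every integer j with 1 ≤ j ≤ p'−1: σ_{j+1} + σ_{p'+1−j} = 2 if j ≡ 0 (mod 2m), σ_{j+1} + σ_{p'+1−j} = −2 if j ≡ m (mod 2m), and σ_{j+1} + σ_{p'+1−j} = 0 otherwise. -/
open Finset

noncomputable section

/-- `σ_j` read off from Euclidean division: only the parity of the quotient matters. -/
lemma sigmaT_eq_of_euclidean {l t j a : ℕ} {Q r : ℤ}
    (h : (((2 * j - 1) * t : ℕ) : ℤ) = r + l * Q) (hr0 : 0 ≤ r) (hrl : r < l)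
    (hpar : Even (Q + a)) : sigmaT l t j = (-1) ^ a := by
  have hQ : (((2 * j - 1) * t / l : ℕ) : ℤ) = Q := by
    rw [Int.natCast_div, h, Int.add_mul_ediv_left _ _ (by omega),
      Int.ediv_eq_zero_of_lt hr0 hrl, zero_add]
  have hE : Even ((2 * j - 1) * t / l + a) := by
    have : Even ((((2 * j - 1) * t / l + a : ℕ)) : ℤ) := by
      rw [Nat.cast_add, hQ]; exact hpar
    exact_mod_cast this
  exact (neg_one_pow_congr (Nat.even_add.mp hE))

/-- Lemma 2.5(ii): for `l = 4mp+1`, `t = 4mp-2p+1`, `p' = 2mp`, the value of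
`σ_(j+1) + σ_(p'+1-j)` for `1 ≤ j ≤ p'-1`. -/
theorem sigma_pair_sum_neg_pos
    (m p j : ℕ) (hm : 0 < m) (hp : 0 < p)
    (hj1 : 1 ≤ j) (hj2 : j ≤ 2 * m * p - 1) :
    sigmaT (4 * m * p + 1) (4 * m * p - 2 * p + 1) (j + 1) + sigmaT (4 * m * p + 1) (4 * m * p - 2 * p + 1) (2 * m * p + 1 - j)
      = if j % (2 * m) = 0 then 2 else if j % (2 * m) = m then -2 else 0 := by
  obtain ⟨a, b, hb, rfl⟩ : ∃ a b, b < m ∧ j = m * a + b :=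
    ⟨j / m, j % m, Nat.mod_lt _ hm, (Nat.div_add_mod j m).symm⟩
  have hmp : p ≤ m * p := Nat.le_mul_of_pos_left p hm
  have hlt : m * a + b < 2 * (m * p) := by
    rw [mul_assoc] at hj2; omega
  have ha : a < 2 * p := by
    by_contra! h
    have := Nat.mul_le_mul_left m h
    have : m * (2 * p) = 2 * (m * p) := by ring
    omega
  have hbp : b * p + p ≤ m * p := by
    calc b * p + p = (b + 1) * p := by ring
      _ ≤ m * p := Nat.mul_le_mul_right p hb
  have ht : ((4 * m * p - 2 * p + 1 : ℕ) : ℤ) = 4 * m * p - 2 * p + 1 := by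
    rw [Nat.cast_add, Nat.cast_sub (by rw [mul_assoc]; omega)]
    push_cast; ring
  have hk₁ : ((2 * (m * a + b + 1) - 1 : ℕ) : ℤ) = 2 * (m * a + b) + 1 := by
    rw [Nat.cast_sub (by omega)]; push_cast; ring
  have hk₂ : ((2 * (2 * m * p + 1 - (m * a + b)) - 1 : ℕ) : ℤ)
      = 4 * m * p + 1 - 2 * (m * a + b) := by
    rw [mul_assoc 2 m p, Nat.cast_sub (by omega), Nat.cast_mul, Nat.cast_sub (by omega)]
    push_cast; ring
  have hbpZ : (b : ℤ) * p + p ≤ m * p := by exact_mod_cast hbp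
  have hbp0 : (0 : ℤ) ≤ b * p := by positivity
  have h₁ : sigmaT (4 * m * p + 1) (4 * m * p - 2 * p + 1) (m * a + b + 1) = (-1) ^ a := by
    refine sigmaT_eq_of_euclidean (Q := 2 * (m * a + b) - a)
      (r := 4 * m * p + 1 - (4 * b * p + 2 * p - a)) ?_ ?_ ?_ ?_
    · rw [Nat.cast_mul, ht, hk₁]; push_cast; ring
    · linarith
    · push_cast; linarith
    · exact ⟨m * a + b, by ring⟩
  have hmod : (m * a + b) % (2 * m) = m * (a % 2) + b := by
    rw [mul_comm 2 m, Nat.mod_mul, Nat.mul_add_mod, Nat.mod_eq_of_lt hb,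
      Nat.mul_add_div hm, Nat.div_eq_of_lt hb, add_zero, add_comm]
  rw [h₁, hmod]
  rcases Nat.eq_zero_or_pos b with rfl | hb0
  · have ha0 : 0 < a := by
      rcases Nat.eq_zero_or_pos a with rfl | h
      · simp at hj1
      · exact h
    have h₂ : sigmaT (4 * m * p + 1) (4 * m * p - 2 * p + 1) (2 * m * p + 1 - (m * a + 0))
        = (-1) ^ a := by
      refine sigmaT_eq_of_euclidean (Q := 4 * m * p - 2 * p - 2 * (m * a) + a)
        (r := 4 * m * p + 1 - a) ?_ ?_ ?_ ?_
      · rw [Nat.cast_mul, ht, hk₂]; push_cast; ring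
      · linarith
      · push_cast; linarith
      · exact ⟨2 * m * p - p - m * a + a, by ring⟩
    rw [h₂]
    rcases Nat.even_or_odd a with h | h
    · simp [Nat.even_iff.mp h, h.neg_one_pow]
    · simp [Nat.odd_iff.mp h, h.neg_one_pow, hm.ne']
  · have hpb : (p : ℤ) ≤ b * p := by
      exact_mod_cast Nat.le_mul_of_pos_left p hb0
    have h₂ : sigmaT (4 * m * p + 1) (4 * m * p - 2 * p + 1) (2 * m * p + 1 - (m * a + b))
        = (-1) ^ (a + 1) := by
      refine sigmaT_eq_of_euclidean (Q := 4 * m * p + 1 - 2 * p - 2 * (m * a + b) + a)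
        (r := 4 * b * p - a) ?_ ?_ ?_ ?_
      · rw [Nat.cast_mul, ht, hk₂]; push_cast; ring
      · linarith
      · push_cast; linarith
      · exact ⟨2 * m * p + 1 - p - (m * a + b) + a, by push_cast; ring⟩
    rw [h₂, pow_succ, if_neg (by omega), if_neg]
    · ring
    · rcases Nat.mod_two_eq_zero_or_one a with h | h <;> rw [h] <;> omega

end
end

section
/- Let m ≥ 2 and p ≥ 1 be integers and let n_1, …, n_{2mp−1} be integers, with the convention n_s = 0 for every index s ≤ 0. Then the following expression E: E = Σ_{j=1}^{p} Σ_{j'=1}^{j} Σ_{k=1}^{m−1} Σ_{k'=1}^{k} (n_{2mj−k} − n_{2mj−k−1})(n_{2mj'−2m+k−k'+1} − n_{2mj'−2m+k−k'}) − Σ_{j=1}^{p} Σ_{j'=1}^{j} Σ_{k=1}^{m} Σ_{k'=1}^{m−k+1} (n_{2mj−m−k+1} − n_{2mj−m−k})(n_{2mj'−2m−k'+1} − n_{2mj'−2m−k'}) + Σ_{s=1}^{m−1} Σ_{j=1}^{p} ( Σ_{j'=1}^{j−1} (n_{2mj'−s} − n_{2mj'−2m+s}) + Σ_{j'=j}^{p}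 (n_{2mj'−s} − n_{2mj'−2m+s−1}) ) n_{2mj−2m+s−1} + Σ_{j=1}^{p} ( Σ_{j'=j}^{p} (n_{2mj'−m} − n_{2mj'−m−1}) ) n_{2mj−m−1} − Σ_{j=1}^{p−1} ( Σ_{j'=j+1}^{p} (n_{2mj'−1} − n_{2mj'−2m}) + n_{2mj} ) n_{2mj−1} − Σ_{s=1}^{m−1} Σ_{j=1}^{p} ( Σ_{j'=1}^{j} (n_{2mj'−m+s} − n_{2mj'−m−s}) + Σ_{j'=j+1}^{p} (n_{2mj'−m+s−1} − n_{2mj'−m−s}) ) n_{2mj−m+s−1} + Σ_{j=1}^{p} [ n_{2mj−2m+1}(n_{2mj−2m+1}+1)/2 − n_{2mj−2m+1} n_{2mj−2m} + n_{2mj−m−1}(n_{2mj−m−1}−1)/2 − n_{2mj−m} n_{2mj−m−1} + (1/2) Σ_{s=2}^{m−1} (n_{2mj−2m+s} − n_{2mj−2m+s−1})(n_{2mj−2m+s} − n_{2mj−2m+s−1} + 1) ] satisfies E = Σ_{1 ≤ i < j ≤ 2mp−1, m ∤ i} ε_{i,j,m} n_i n_j − Σ_{i=1}^{2mp−2} n_i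 n_{i+1}. -/
open Finset

noncomputable section

/-- The entry of `n` at position `k` from the left end of the `J`-th block of length `2(M+1)`. -/
def blockLo (M : ℕ) (n : ℤ → ℤ) (J k : ℕ) : ℤ := n (2 * (M + 1) * J + k)

/-- The entry of `n` at position `k` from the right end of the `J`-th block of length `2(M+1)`. -/
def blockHi (M : ℕ) (n : ℤ → ℤ) (J k : ℕ) : ℤ := n (2 * (M + 1) * J + 2 * (M + 1) - k)

lemma blockHi_mid (M : ℕ) (n : ℤ → ℤ) (J : ℕ) :
    blockHi M n J (M + 1) = blockLo M n J (M + 1) := by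
  unfold blockHi blockLo
  congr 1
  push_cast
  ring

lemma blockLo_eq_blockHi (M : ℕ) (n : ℤ → ℤ) (J : ℕ) {r k : ℕ} (h : r + k = 2 * (M + 1)) :
    blockLo M n J r = blockHi M n J k := by
  unfold blockHi blockLo
  congr 1
  have : (r : ℤ) + k = 2 * (M + 1) := by exact_mod_cast h
  linarith

lemma sum_Icc_one {R : Type*} [AddCommMonoid R] (f : ℕ → R) (p : ℕ) :
    ∑ j ∈ Icc 1 p, f j = ∑ j ∈ range p, f (j + 1) := by
  induction p with
  | zero => simp
  | succ p ih => rw [Finset.sum_Icc_succ_top (by omega), ih, sum_range_succ]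

/-- Interchange of summation over the triangle `j ≤ j'`. -/
lemma sum_Icc_upper (f : ℕ → ℕ → ℤ) (p : ℕ) :
    ∑ j ∈ range p, ∑ j' ∈ Icc (j + 1) p, f j j' =
      ∑ j ∈ range p, ∑ j' ∈ range (j + 1), f j' (j + 1) := by
  induction p with
  | zero => simp
  | succ p ih =>
    rw [sum_range_succ, sum_range_succ, ← ih, Icc_self, sum_singleton, sum_range_succ,
      ← add_assoc, ← sum_add_distrib]
    congr 1
    refine sum_congr rfl fun j hj => ?_
    rw [Finset.sum_Icc_succ_top (by have := mem_range.1 hj; omega)]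

/-- Interchange of summation over the triangle `j < j'`. -/
lemma sum_Icc_upper_strict (f : ℕ → ℕ → ℤ) (p : ℕ) :
    ∑ j ∈ range p, ∑ j' ∈ Icc (j + 1 + 1) p, f j j' =
      ∑ j ∈ range p, ∑ j' ∈ range j, f j' (j + 1) := by
  induction p with
  | zero => simp
  | succ p ih =>
    rw [sum_range_succ, sum_range_succ, ← ih, Icc_eq_empty (by omega), sum_empty, add_zero,
      ← sum_add_distrib]
    refine sum_congr rfl fun j hj => ?_
    rw [Finset.sum_Icc_succ_top (by have := mem_range.1 hj; omega)]

lemma sum_Icc_telescope (n : ℤ → ℤ) (c : ℤ) (k : ℕ) :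
    ∑ i ∈ Icc 1 k, (n (c - i + 1) - n (c - i)) = n c - n (c - k) := by
  induction k with
  | zero => simp
  | succ k ih =>
    rw [Finset.sum_Icc_succ_top (by omega), ih]
    push_cast
    rw [show c - ((k : ℤ) + 1) + 1 = c - k by ring]
    ring

lemma sum_diff_mul_diff_left (M p : ℕ) (n : ℤ → ℤ) :
    ∑ j ∈ Icc 1 p, ∑ j' ∈ Icc 1 j, ∑ k ∈ Icc 1 (M + 1 - 1), ∑ k' ∈ Icc 1 k,
        (n (2 * (M + 1 : ℕ) * j - k) - n (2 * (M + 1 : ℕ) * j - k - 1)) *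
          (n (2 * (M + 1 : ℕ) * j' - 2 * (M + 1 : ℕ) + k - k' + 1)
            - n (2 * (M + 1 : ℕ) * j' - 2 * (M + 1 : ℕ) + k - k')) =
      ∑ j ∈ range p, ∑ j' ∈ range (j + 1), ∑ k ∈ range M,
        (blockHi M n j (k + 1) - blockHi M n j (k + 2)) *
          (blockLo M n j' (k + 1) - blockLo M n j' 0) := by
  simp only [← mul_sum, sum_Icc_telescope]
  simp only [sum_Icc_one, Nat.add_sub_cancel]
  refine sum_congr rfl fun j _ => sum_congr rfl fun j' _ => sum_congr rfl fun k _ => ?_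
  unfold blockHi blockLo
  congr! 3 <;> push_cast <;> ring

lemma sum_diff_mul_diff_right (M p : ℕ) (n : ℤ → ℤ) (h0 : ∀ s : ℤ, s ≤ 0 → n s = 0) :
    ∑ j ∈ Icc 1 p, ∑ j' ∈ Icc 1 j, ∑ k ∈ Icc 1 (M + 1), ∑ k' ∈ Icc 1 (M + 1 - k + 1),
        (n (2 * (M + 1 : ℕ) * j - (M + 1 : ℕ) - k + 1)
            - n (2 * (M + 1 : ℕ) * j - (M + 1 : ℕ) - k)) *
          (n (2 * (M + 1 : ℕ) * j' - 2 * (M + 1 : ℕ) - k' + 1)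
            - n (2 * (M + 1 : ℕ) * j' - 2 * (M + 1 : ℕ) - k')) =
      ∑ j ∈ range p, (∑ j' ∈ range (j + 1),
          (blockLo M n j (M + 1) - blockLo M n j 0) * blockLo M n j' 0
        - ∑ j' ∈ range j, ∑ k ∈ range (M + 1),
          (blockLo M n j (k + 1) - blockLo M n j k) * blockHi M n j' (k + 1)) := by
  simp only [← mul_sum, sum_Icc_telescope]
  simp only [sum_Icc_one]
  refine sum_congr rfl fun j _ => ?_
  have key : ∀ j' : ℕ, ∑ k ∈ range (M + 1),
      (n (2 * (M + 1 : ℕ) * (j + 1 : ℕ) - (M + 1 : ℕ) - (k + 1 : ℕ) + 1)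
          - n (2 * (M + 1 : ℕ) * (j + 1 : ℕ) - (M + 1 : ℕ) - (k + 1 : ℕ))) *
        (n (2 * (M + 1 : ℕ) * (j' + 1 : ℕ) - 2 * (M + 1 : ℕ))
          - n (2 * (M + 1 : ℕ) * (j' + 1 : ℕ) - 2 * (M + 1 : ℕ)
            - (M + 1 - (k + 1) + 1 : ℕ))) =
      (blockLo M n j (M + 1) - blockLo M n j 0) * blockLo M n j' 0
        - ∑ k ∈ range (M + 1), (blockLo M n j (k + 1) - blockLo M n j k) *
            n (2 * (M + 1) * j' - (k + 1)) := by
    intro j'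
    rw [← sum_range_sub (blockLo M n j) (M + 1), sum_mul, ← sum_sub_distrib, ← sum_range_reflect]
    refine sum_congr rfl fun k hk => ?_
    obtain ⟨d, rfl⟩ : ∃ d, M = k + d := ⟨M - k, by have := mem_range.1 hk; omega⟩
    rw [show k + d + 1 - 1 - k = d by omega, show k + d + 1 - (d + 1) + 1 = k + 1 by omega,
      ← mul_sub]
    unfold blockLo
    congr! 3 <;> push_cast <;> ring
  simp only [key, sum_sub_distrib, ← mul_sum]
  congr 1
  rw [sum_range_succ']
  have hz : ∑ k ∈ range (M + 1), (blockLo M n j (k + 1) - blockLo M n j k) *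
      n (2 * (M + 1) * (0 : ℕ) - (k + 1)) = 0 :=
    sum_eq_zero fun k _ => by
      rw [h0 _ (by push_cast; linarith [Int.natCast_nonneg k]), mul_zero]
  rw [hz, add_zero]
  refine sum_congr rfl fun j' _ => sum_congr rfl fun k _ => ?_
  unfold blockHi
  push_cast
  ring_nf

lemma sum_low_part (M p : ℕ) (n : ℤ → ℤ) :
    ∑ s ∈ Icc 1 (M + 1 - 1), ∑ j ∈ Icc 1 p,
        ((∑ j' ∈ Icc 1 (j - 1), (n (2 * (M + 1 : ℕ) * j' - s)
              - n (2 * (M + 1 : ℕ) * j' - 2 * (M + 1 : ℕ) + s)))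
          + ∑ j' ∈ Icc j p, (n (2 * (M + 1 : ℕ) * j' - s)
              - n (2 * (M + 1 : ℕ) * j' - 2 * (M + 1 : ℕ) + s - 1))) *
          n (2 * (M + 1 : ℕ) * j - 2 * (M + 1 : ℕ) + s - 1) =
      ∑ j ∈ range p, (∑ j' ∈ range j, ∑ k ∈ range M,
          (blockHi M n j' (k + 1) - blockLo M n j' (k + 1)) * blockLo M n j k
        + ∑ j' ∈ range (j + 1), ∑ k ∈ range M,
          (blockHi M n j (k + 1) - blockLo M n j k) * blockLo M n j' k) := by
  simp only [sum_Icc_one, Nat.add_sub_cancel, add_mul, sum_mul, sum_add_distrib, sum_Icc_upper]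
  congr 1
  all_goals
    rw [sum_comm]
    refine sum_congr rfl fun j _ => ?_
    rw [sum_comm]
    refine sum_congr rfl fun j' _ => sum_congr rfl fun k _ => ?_
    unfold blockHi blockLo
    push_cast
    ring_nf

lemma sum_mid_part (M p : ℕ) (n : ℤ → ℤ) :
    ∑ j ∈ Icc 1 p, (∑ j' ∈ Icc j p, (n (2 * (M + 1 : ℕ) * j' - (M + 1 : ℕ))
          - n (2 * (M + 1 : ℕ) * j' - (M + 1 : ℕ) - 1))) *
        n (2 * (M + 1 : ℕ) * j - (M + 1 : ℕ) - 1) =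
      ∑ j ∈ range p, ∑ j' ∈ range (j + 1),
        (blockLo M n j (M + 1) - blockLo M n j M) * blockLo M n j' M := by
  simp only [sum_Icc_one, sum_mul, sum_Icc_upper]
  refine sum_congr rfl fun j _ => sum_congr rfl fun j' _ => ?_
  unfold blockLo
  push_cast
  ring_nf

lemma sum_last_part (M p : ℕ) (hp : 0 < p) (n : ℤ → ℤ) (h0 : ∀ s : ℤ, s ≤ 0 → n s = 0) :
    ∑ j ∈ Icc 1 (p - 1), ((∑ j' ∈ Icc (j + 1) p, (n (2 * (M + 1 : ℕ) * j' - 1)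
          - n (2 * (M + 1 : ℕ) * j' - 2 * (M + 1 : ℕ))))
          + n (2 * (M + 1 : ℕ) * j)) * n (2 * (M + 1 : ℕ) * j - 1) =
      ∑ j ∈ range p, (∑ j' ∈ range j,
          (blockHi M n j 1 - blockLo M n j 0) * blockHi M n j' 1
        + n (2 * (M + 1) * j) * n (2 * (M + 1) * j - 1)) := by
  have hS := sum_Icc_upper_strict (fun j j' => (n (2 * (M + 1 : ℕ) * j' - 1)
    - n (2 * (M + 1 : ℕ) * j' - 2 * (M + 1 : ℕ))) * n (2 * (M + 1 : ℕ) * (j + 1 : ℕ) - 1)) p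
  obtain ⟨P, rfl⟩ : ∃ P, p = P + 1 := ⟨p - 1, by omega⟩
  rw [sum_range_succ, Icc_eq_empty (by omega : ¬ P + 1 + 1 ≤ P + 1), sum_empty, add_zero] at hS
  simp only [sum_Icc_one, Nat.add_sub_cancel, add_mul, sum_mul, sum_add_distrib]
  rw [hS]
  congr 1
  · refine sum_congr rfl fun j _ => sum_congr rfl fun j' _ => ?_
    unfold blockHi blockLo
    push_cast
    ring_nf
  · rw [sum_range_succ', h0 (2 * (M + 1) * (0 : ℕ)) (by simp)]
    simp

lemma sum_high_part (M p : ℕ) (n : ℤ → ℤ) :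
    ∑ s ∈ Icc 1 (M + 1 - 1), ∑ j ∈ Icc 1 p,
        ((∑ j' ∈ Icc 1 j, (n (2 * (M + 1 : ℕ) * j' - (M + 1 : ℕ) + s)
              - n (2 * (M + 1 : ℕ) * j' - (M + 1 : ℕ) - s)))
          + ∑ j' ∈ Icc (j + 1) p, (n (2 * (M + 1 : ℕ) * j' - (M + 1 : ℕ) + s - 1)
              - n (2 * (M + 1 : ℕ) * j' - (M + 1 : ℕ) - s))) *
          n (2 * (M + 1 : ℕ) * j - (M + 1 : ℕ) + s - 1) =
      ∑ j ∈ range p, (∑ j' ∈ range (j + 1), ∑ k ∈ range M,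
          (blockHi M n j' (k + 1) - blockLo M n j' (k + 1)) * blockHi M n j (k + 2)
        + ∑ j' ∈ range j, ∑ k ∈ range M,
          (blockHi M n j (k + 2) - blockLo M n j (k + 1)) * blockHi M n j' (k + 2)) := by
  simp only [sum_Icc_one, Nat.add_sub_cancel, add_mul, sum_mul, sum_add_distrib,
    sum_Icc_upper_strict]
  congr 1
  all_goals
    rw [sum_comm]
    refine sum_congr rfl fun j _ => ?_
    rw [sum_comm]
    refine sum_congr rfl fun j' _ => ?_
    rw [← sum_range_reflect]
    refine sum_congr rfl fun k hk => ?_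
    obtain ⟨d, rfl⟩ : ∃ d, M = k + 1 + d := ⟨M - (k + 1), by have := mem_range.1 hk; omega⟩
    rw [show k + 1 + d - 1 - k = d by omega]
    unfold blockHi blockLo
    push_cast
    ring_nf

/-- Completing the squares in the half-integral terms of one block. -/
lemma half_sum_eq (M : ℕ) (x : ℕ → ℚ) :
    x 1 * (x 1 + 1) / 2 - x 1 * x 0 + x (M + 1) * (x (M + 1) - 1) / 2 - x (M + 2) * x (M + 1)
        + 1 / 2 * ∑ s ∈ range M, (x (s + 2) - x (s + 1)) * (x (s + 2) - x (s + 1) + 1) =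
      ∑ k ∈ range (M + 1), x (k + 1) ^ 2 - ∑ k ∈ range (M + 2), x k * x (k + 1) := by
  rw [sum_range_succ _ (M + 1)]
  induction M with
  | zero => simp; ring
  | succ M ih =>
    rw [sum_range_succ, sum_range_succ _ (M + 1), sum_range_succ _ (M + 1)]
    linear_combination ih

lemma half_integral_part (M p : ℕ) (hM : 0 < M) (n : ℤ → ℤ) :
    ∑ j ∈ Icc 1 p,
        ((n (2 * (M + 1 : ℕ) * j - 2 * (M + 1 : ℕ) + 1) : ℚ)
            * ((n (2 * (M + 1 : ℕ) * j - 2 * (M + 1 : ℕ) + 1) : ℚ) + 1) / 2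
          - (n (2 * (M + 1 : ℕ) * j - 2 * (M + 1 : ℕ) + 1) : ℚ)
            * (n (2 * (M + 1 : ℕ) * j - 2 * (M + 1 : ℕ)) : ℚ)
          + (n (2 * (M + 1 : ℕ) * j - (M + 1 : ℕ) - 1) : ℚ)
            * ((n (2 * (M + 1 : ℕ) * j - (M + 1 : ℕ) - 1) : ℚ) - 1) / 2
          - (n (2 * (M + 1 : ℕ) * j - (M + 1 : ℕ)) : ℚ)
            * (n (2 * (M + 1 : ℕ) * j - (M + 1 : ℕ) - 1) : ℚ)
          + (1 / 2 : ℚ) * ∑ s ∈ Icc 2 (M + 1 - 1),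
              ((n (2 * (M + 1 : ℕ) * j - 2 * (M + 1 : ℕ) + s) : ℚ)
                - (n (2 * (M + 1 : ℕ) * j - 2 * (M + 1 : ℕ) + s - 1) : ℚ)) *
                ((n (2 * (M + 1 : ℕ) * j - 2 * (M + 1 : ℕ) + s) : ℚ)
                - (n (2 * (M + 1 : ℕ) * j - 2 * (M + 1 : ℕ) + s - 1) : ℚ) + 1)) =
      ((∑ j ∈ range p, (∑ k ∈ range M, blockLo M n j (k + 1) ^ 2
        - ∑ k ∈ range (M + 1), blockLo M n j k * blockLo M n j (k + 1)) : ℤ) : ℚ) := by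
  rw [sum_Icc_one]
  push_cast
  refine sum_congr rfl fun j _ => ?_
  obtain ⟨L, rfl⟩ : ∃ L, M = L + 1 := ⟨M - 1, by omega⟩
  rw [← half_sum_eq L (fun k => (blockLo (L + 1) n j k : ℚ)),
    ← Finset.Ico_add_one_right_eq_Icc, sum_Ico_eq_sum_range,
    show L + 1 + 1 - 2 = L by omega]
  unfold blockLo
  push_cast
  ring_nf

lemma sum_range_blocks (d p : ℕ) (f : ℕ → ℤ) :
    ∑ i ∈ range (d * p), f i = ∑ J ∈ range p, ∑ r ∈ range d, f (d * J + r) := by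
  induction p with
  | zero => simp
  | succ p ih => rw [mul_add, mul_one, sum_range_add, ih, sum_range_succ]

lemma sum_range_fold (M : ℕ) (f : ℕ → ℤ) :
    ∑ t ∈ range (2 * (M + 1)), f t =
      f 0 + f (M + 1) + ∑ k ∈ range M, (f (k + 1) + f (2 * (M + 1) - (k + 1))) := by
  rw [show 2 * (M + 1) = (M + 1) + (M + 1) by ring, sum_range_add, sum_range_succ',
    sum_range_succ' (fun x => f (M + 1 + x)), sum_add_distrib,
    ← sum_range_reflect (fun k => f (M + 1 + (k + 1)))]
  have : ∑ k ∈ range M, f (M + 1 + (M - 1 - k + 1)) =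
      ∑ k ∈ range M, f (M + 1 + (M + 1) - (k + 1)) :=
    sum_congr rfl fun k hk => by
      have := mem_range.1 hk
      congr 1
      omega
  rw [this, add_zero]
  ring

lemma dvd_iff_eq_of_lt {d c : ℕ} (h : 0 < c) (h' : c < 2 * d) : d ∣ c ↔ c = d := by
  constructor
  · rintro ⟨q, rfl⟩
    have hq : 0 < q := Nat.pos_of_mul_pos_left h
    have : q < 2 := by
      by_contra hq2
      nlinarith
    rw [show q = 1 by omega, mul_one]
  · rintro rfl
    rfl

/-- `epsLO` depends only on the residues modulo `2m`, and is a combination of four delta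
functions. -/
lemma epsLO_block {m t r : ℕ} (J K : ℕ) (ht : t < 2 * m) (hr : r < 2 * m) :
    epsLO m (2 * m * J + t) (2 * m * K + r) =
      if t = 0 ∨ t = m then 0 else
        (if r = 2 * m - t then 1 else 0) + (if r = 2 * m - t - 1 then 1 else 0)
          - (if r = t then 1 else 0) - (if r = t - 1 then 1 else 0) := by
  unfold epsLO
  have h1 : m ∣ 2 * m * J + t ↔ t = 0 ∨ t = m := by
    rw [Nat.dvd_add_right ⟨2 * J, by ring⟩]
    rcases Nat.eq_zero_or_pos t with rfl | h
    · simp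
    · rw [dvd_iff_eq_of_lt h ht]
      omega
  by_cases hc : t = 0 ∨ t = m
  · rw [if_pos (h1.2 hc), if_pos hc]
  rw [if_neg (h1.not.2 hc), if_neg hc]
  have h2 : 2 * m ∣ 2 * m * J + t + (2 * m * K + r) ↔ t + r = 2 * m := by
    rw [show 2 * m * J + t + (2 * m * K + r) = 2 * m * (J + K) + (t + r) by ring,
      Nat.dvd_add_right ⟨J + K, rfl⟩, dvd_iff_eq_of_lt (by omega) (by omega)]
  have h3 : 2 * m ∣ 2 * m * J + t + (2 * m * K + r) + 1 ↔ t + r + 1 = 2 * m := by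
    rw [show 2 * m * J + t + (2 * m * K + r) + 1 = 2 * m * (J + K) + (t + r + 1) by ring,
      Nat.dvd_add_right ⟨J + K, rfl⟩, dvd_iff_eq_of_lt (by omega) (by omega)]
  have hz : ∀ c : ℤ, |c| < 2 * m → ((2 * (m : ℤ)) ∣ c ↔ c = 0) := fun c hc =>
    ⟨fun h => Int.eq_zero_of_abs_lt_dvd h hc, fun h => h ▸ dvd_zero _⟩
  have h4 : (2 * (m : ℤ)) ∣ ((2 * m * K + r : ℕ) : ℤ) - ((2 * m * J + t : ℕ) : ℤ) ↔ r = t := by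
    rw [show ((2 * m * K + r : ℕ) : ℤ) - ((2 * m * J + t : ℕ) : ℤ) =
        2 * (m : ℤ) * ((K : ℤ) - J) + ((r : ℤ) - t) by push_cast; ring,
      dvd_add_right ⟨_, rfl⟩, hz _ (by rw [abs_lt]; omega)]
    omega
  have h5 : (2 * (m : ℤ)) ∣ ((2 * m * K + r : ℕ) : ℤ) - ((2 * m * J + t : ℕ) : ℤ) + 1 ↔
      r + 1 = t := by
    rw [show ((2 * m * K + r : ℕ) : ℤ) - ((2 * m * J + t : ℕ) : ℤ) + 1 =
        2 * (m : ℤ) * ((K : ℤ) - J) + ((r : ℤ) - t + 1) by push_cast; ring,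
      dvd_add_right ⟨_, rfl⟩, hz _ (by rw [abs_lt]; omega)]
    omega
  simp only [h2, h3, h4, h5]
  split_ifs <;> omega

/-- The `epsLO`-form between two different blocks. -/
lemma sum_epsLO_off_diagonal (M J K : ℕ) (n : ℤ → ℤ) :
    ∑ r ∈ range (2 * (M + 1)), ∑ t ∈ range (2 * (M + 1)),
        epsLO (M + 1) (2 * (M + 1) * J + t) (2 * (M + 1) * K + r)
          * blockLo M n J t * blockLo M n K r =
      ∑ k ∈ range M,
        (blockLo M n J (k + 1) * (blockHi M n K (k + 1) + blockHi M n K (k + 2)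
            - blockLo M n K (k + 1) - blockLo M n K k)
          + blockHi M n J (k + 1) * (blockLo M n K (k + 1) + blockLo M n K k
            - blockHi M n K (k + 1) - blockHi M n K (k + 2))) := by
  rw [sum_comm]
  have key : ∀ t ∈ range (2 * (M + 1)), ∑ r ∈ range (2 * (M + 1)),
        epsLO (M + 1) (2 * (M + 1) * J + t) (2 * (M + 1) * K + r)
          * blockLo M n J t * blockLo M n K r =
      if t = 0 ∨ t = M + 1 then 0 else blockLo M n J t *
        (blockLo M n K (2 * (M + 1) - t) + blockLo M n K (2 * (M + 1) - t - 1)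
          - blockLo M n K t - blockLo M n K (t - 1)) := by
    intro t ht
    rw [mem_range] at ht
    rw [sum_congr rfl fun r hr => by rw [epsLO_block J K ht (mem_range.1 hr)]]
    split_ifs with hc
    · simp
    · simp only [sub_mul, add_mul, ite_mul, one_mul, zero_mul, sum_sub_distrib, sum_add_distrib,
        sum_ite_eq', mem_range]
      rw [if_pos (by omega), if_pos (by omega), if_pos (by omega), if_pos (by omega)]
      ring
  rw [sum_congr rfl key, sum_range_fold, if_pos (Or.inl rfl), if_pos (Or.inr rfl), zero_add,
    zero_add]
  refine sum_congr rfl fun k hk => ?_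
  rw [mem_range] at hk
  rw [if_neg (by omega), if_neg (by omega),
    blockLo_eq_blockHi M n K (by omega : 2 * (M + 1) - (k + 1) + (k + 1) = 2 * (M + 1)),
    blockLo_eq_blockHi M n J (by omega : 2 * (M + 1) - (k + 1) + (k + 1) = 2 * (M + 1)),
    blockLo_eq_blockHi M n K (by omega : 2 * (M + 1) - (k + 1) - 1 + (k + 2) = 2 * (M + 1)),
    show 2 * (M + 1) - (2 * (M + 1) - (k + 1)) = k + 1 by omega]
  simp only [Nat.add_sub_cancel]

/-- The `epsLO`-form inside one block. -/
lemma sum_epsLO_diagonal (M J : ℕ) (n : ℤ → ℤ) :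
    ∑ r ∈ range (2 * (M + 1)), ∑ t ∈ range r,
        epsLO (M + 1) (2 * (M + 1) * J + t) (2 * (M + 1) * J + r)
          * blockLo M n J t * blockLo M n J r =
      ∑ k ∈ range M,
        blockLo M n J (k + 1) * (blockHi M n J (k + 1) + blockHi M n J (k + 2)) := by
  have hlt : ∀ r ∈ range (2 * (M + 1)), ∑ t ∈ range r,
        epsLO (M + 1) (2 * (M + 1) * J + t) (2 * (M + 1) * J + r)
          * blockLo M n J t * blockLo M n J r =
      ∑ t ∈ range (2 * (M + 1)), if t < r then
        epsLO (M + 1) (2 * (M + 1) * J + t) (2 * (M + 1) * J + r)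
          * blockLo M n J t * blockLo M n J r else 0 := by
    intro r hr
    rw [mem_range] at hr
    rw [← sum_filter]
    refine sum_congr ?_ fun _ _ => rfl
    ext t
    simp only [mem_range, mem_filter]
    omega
  rw [sum_congr rfl hlt, sum_comm]
  have key : ∀ t ∈ range (2 * (M + 1)), ∑ r ∈ range (2 * (M + 1)), (if t < r then
        epsLO (M + 1) (2 * (M + 1) * J + t) (2 * (M + 1) * J + r)
          * blockLo M n J t * blockLo M n J r else 0) =
      if t = 0 ∨ M + 1 ≤ t then 0 else blockLo M n J t *
        (blockLo M n J (2 * (M + 1) - t) + blockLo M n J (2 * (M + 1) - t - 1)) := by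
    intro t ht
    rw [mem_range] at ht
    have hcoef : ∀ r ∈ range (2 * (M + 1)), (if t < r then
        epsLO (M + 1) (2 * (M + 1) * J + t) (2 * (M + 1) * J + r)
          * blockLo M n J t * blockLo M n J r else 0) =
        (if t = 0 ∨ M + 1 ≤ t then 0 else
          (if r = 2 * (M + 1) - t then 1 else 0) + (if r = 2 * (M + 1) - t - 1 then 1 else 0))
          * (blockLo M n J t * blockLo M n J r) := by
      intro r hr
      rw [mem_range] at hr
      rw [epsLO_block J J ht hr, ← mul_assoc, ← zero_mul (blockLo M n J t * blockLo M n J r),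
        ← mul_assoc, ← ite_mul, ← ite_mul]
      congr 2
      split_ifs <;> omega
    rw [sum_congr rfl hcoef]
    split_ifs with hc
    · simp
    · simp only [add_mul, ite_mul, one_mul, zero_mul, sum_add_distrib, sum_ite_eq', mem_range]
      rw [if_pos (by omega), if_pos (by omega)]
      ring
  rw [sum_congr rfl key, sum_range_fold, if_pos (Or.inl rfl), if_pos (Or.inr le_rfl), zero_add,
    zero_add]
  refine sum_congr rfl fun k hk => ?_
  rw [mem_range] at hk
  rw [if_neg (by omega), if_pos (by omega),
    blockLo_eq_blockHi M n J (by omega : 2 * (M + 1) - (k + 1) + (k + 1) = 2 * (M + 1)),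
    blockLo_eq_blockHi M n J (by omega : 2 * (M + 1) - (k + 1) - 1 + (k + 2) = 2 * (M + 1)),
    add_zero]

/-- Interchange of summation over `i < j`, with the excluded indices absorbed by the vanishing
of `epsLO`. -/
lemma sum_epsLO_triangle (m N : ℕ) (n : ℤ → ℤ) :
    ∑ i ∈ (Icc 1 N).filter (fun i => ¬ m ∣ i), ∑ j ∈ Icc (i + 1) N, epsLO m i j * n i * n j =
      ∑ j ∈ range (N + 1), ∑ i ∈ range j, epsLO m i j * n i * n j := by
  have hdvd : ∀ i j, m ∣ i → epsLO m i j = 0 := fun i j h => if_pos h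
  have hsub : Icc 1 N ⊆ range (N + 1) := fun i hi => by
    simp only [mem_range, mem_Icc] at *
    omega
  rw [sum_filter, sum_comm' (s := range (N + 1)) (t := fun j => range j) (t' := range (N + 1))
    (s' := fun i => Icc (i + 1) N) (by intro x y; simp only [mem_range, mem_Icc]; omega)]
  refine (sum_congr rfl fun i _ => ?_).trans (sum_subset hsub fun i hi hi' => ?_)
  · split_ifs with h
    · exact (sum_eq_zero fun j _ => by rw [hdvd i j h]; ring).symm
    · rfl
  · obtain rfl : i = 0 := by
      simp only [mem_range, mem_Icc] at hi hi'
      omega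
    exact sum_eq_zero fun j _ => by rw [hdvd 0 j (dvd_zero m)]; ring

lemma sum_epsLO (M p : ℕ) (hp : 0 < p) (n : ℤ → ℤ) :
    ∑ i ∈ (Icc 1 (2 * (M + 1) * p - 1)).filter (fun i => ¬ (M + 1) ∣ i),
        ∑ j ∈ Icc (i + 1) (2 * (M + 1) * p - 1), epsLO (M + 1) i j * n i * n j =
      ∑ K ∈ range p, (∑ J ∈ range K, ∑ k ∈ range M,
        (blockLo M n J (k + 1) * (blockHi M n K (k + 1) + blockHi M n K (k + 2)
            - blockLo M n K (k + 1) - blockLo M n K k)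
          + blockHi M n J (k + 1) * (blockLo M n K (k + 1) + blockLo M n K k
            - blockHi M n K (k + 1) - blockHi M n K (k + 2)))
        + ∑ k ∈ range M,
          blockLo M n K (k + 1) * (blockHi M n K (k + 1) + blockHi M n K (k + 2))) := by
  have hpos : 0 < 2 * (M + 1) * p := by positivity
  have hn : ∀ J t : ℕ, n ((2 * (M + 1) * J + t : ℕ) : ℤ) = blockLo M n J t := fun J t => by
    unfold blockLo
    push_cast
    rfl
  rw [sum_epsLO_triangle, Nat.sub_add_cancel hpos, sum_range_blocks]
  refine sum_congr rfl fun K _ => ?_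
  rw [← sum_epsLO_diagonal,
    ← sum_congr rfl fun J (_ : J ∈ range K) => sum_epsLO_off_diagonal M J K n, sum_comm,
    ← sum_add_distrib]
  refine sum_congr rfl fun r _ => ?_
  rw [sum_range_add, sum_range_blocks]
  simp only [hn]

lemma sum_consecutive (M p : ℕ) (hp : 0 < p) (n : ℤ → ℤ) (h0 : ∀ s : ℤ, s ≤ 0 → n s = 0) :
    ∑ i ∈ Icc 1 (2 * (M + 1) * p - 2), n i * n (i + 1) =
      ∑ J ∈ range p, (∑ k ∈ range (M + 1), blockLo M n J k * blockLo M n J (k + 1)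
        + ∑ k ∈ range M, blockHi M n J (k + 1) * blockHi M n J (k + 2)
        + n (2 * (M + 1) * J) * n (2 * (M + 1) * J - 1)) := by
  have hpos : 2 ≤ 2 * (M + 1) * p := by nlinarith
  have h1 : ∑ i ∈ Icc 1 (2 * (M + 1) * p - 2), n i * n (i + 1) =
      ∑ i ∈ range (2 * (M + 1) * p), n i * n (i - 1) := by
    obtain ⟨L, hL⟩ : ∃ L, 2 * (M + 1) * p = L + 2 := ⟨2 * (M + 1) * p - 2, by omega⟩
    rw [hL, sum_range_succ', sum_range_succ', sum_Icc_one]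
    have hz : n ((0 : ℕ) : ℤ) = 0 := h0 _ (by simp)
    have hz' : n (((0 + 1 : ℕ) : ℤ) - 1) = 0 := h0 _ (by simp)
    rw [hz, hz', zero_mul, mul_zero, add_zero, add_zero]
    refine sum_congr rfl fun i _ => ?_
    rw [mul_comm]
    congr 2
    push_cast
    ring
  rw [h1, sum_range_blocks]
  refine sum_congr rfl fun J _ => ?_
  rw [show 2 * (M + 1) = M + (M + 1) + 1 by ring, sum_range_succ', add_comm M,
    sum_range_add, ← sum_range_reflect _ M]
  congr 1
  · congr 1
    · refine sum_congr rfl fun k _ => ?_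
      unfold blockLo
      push_cast
      ring_nf
    · refine sum_congr rfl fun k hk => ?_
      obtain ⟨d, rfl⟩ : ∃ d, M = k + 1 + d := ⟨M - (k + 1), by have := mem_range.1 hk; omega⟩
      rw [show k + 1 + d - 1 - k = d by omega]
      unfold blockHi
      push_cast
      ring_nf
  · push_cast
    ring_nf

/-- The contributions of two different blocks, the entries of the lower one being `x` and `y`,
those of the upper one `z` and `w`, counted from the left and from the right respectively. -/
lemma off_diagonal_identity (M : ℕ) (x y z w : ℕ → ℤ) (hz : w (M + 1) = z (M + 1)) :
    ∑ k ∈ range M, (w (k + 1) - w (k + 2)) * (x (k + 1) - x 0)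
      - (z (M + 1) - z 0) * x 0
      + ∑ k ∈ range (M + 1), (z (k + 1) - z k) * y (k + 1)
      + ∑ k ∈ range M, (y (k + 1) - x (k + 1)) * z k
      + ∑ k ∈ range M, (w (k + 1) - z k) * x k
      + (z (M + 1) - z M) * x M
      - (w 1 - z 0) * y 1
      - ∑ k ∈ range M, (y (k + 1) - x (k + 1)) * w (k + 2)
      - ∑ k ∈ range M, (w (k + 2) - z (k + 1)) * y (k + 2) =
    ∑ k ∈ range M, (x (k + 1) * (w (k + 1) + w (k + 2) - z (k + 1) - z k)
      + y (k + 1) * (z (k + 1) + z k - w (k + 1) - w (k + 2))) := by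
  rw [sum_range_succ _ M, ← hz]
  clear hz
  induction M with
  | zero => simp
  | succ M ih =>
    simp only [sum_range_succ]
    linear_combination ih

/-- The contributions of one block. -/
lemma diagonal_identity (M : ℕ) (x y : ℕ → ℤ) (hx : y (M + 1) = x (M + 1)) :
    ∑ k ∈ range M, (y (k + 1) - y (k + 2)) * (x (k + 1) - x 0)
      - (x (M + 1) - x 0) * x 0
      + ∑ k ∈ range M, (y (k + 1) - x k) * x k
      + (x (M + 1) - x M) * x M
      - ∑ k ∈ range M, (y (k + 1) - x (k + 1)) * y (k + 2)
      + ∑ k ∈ range M, x (k + 1) ^ 2 =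
    ∑ k ∈ range M, x (k + 1) * (y (k + 1) + y (k + 2))
      - ∑ k ∈ range M, y (k + 1) * y (k + 2) := by
  rw [← hx]
  clear hx
  induction M with
  | zero => simp
  | succ M ih =>
    simp only [sum_range_succ]
    linear_combination ih

/-- The key quadratic identity (3.16) = (3.17) in the proof of Theorem 1.1. -/
theorem quadratic_identity_neg_neg
    (m p : ℕ) (hm : 2 ≤ m) (hp : 0 < p) (n : ℤ → ℤ)
    (h0 : ∀ s : ℤ, s ≤ 0 → n s = 0) :
    ((∑ j ∈ Icc 1 p, ∑ j' ∈ Icc 1 j, ∑ k ∈ Icc 1 (m - 1), ∑ k' ∈ Icc 1 k,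
        (n (2 * m * j - k) - n (2 * m * j - k - 1)) *
          (n (2 * m * j' - 2 * m + k - k' + 1) - n (2 * m * j' - 2 * m + k - k'))
      - ∑ j ∈ Icc 1 p, ∑ j' ∈ Icc 1 j, ∑ k ∈ Icc 1 m, ∑ k' ∈ Icc 1 (m - k + 1),
          (n (2 * m * j - m - k + 1) - n (2 * m * j - m - k)) *
            (n (2 * m * j' - 2 * m - k' + 1) - n (2 * m * j' - 2 * m - k'))
      + ∑ s ∈ Icc 1 (m - 1), ∑ j ∈ Icc 1 p,
          ((∑ j' ∈ Icc 1 (j - 1), (n (2 * m * j' - s) - n (2 * m * j' - 2 * m + s)))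
            + ∑ j' ∈ Icc j p, (n (2 * m * j' - s) - n (2 * m * j' - 2 * m + s - 1))) *
            n (2 * m * j - 2 * m + s - 1)
      + ∑ j ∈ Icc 1 p,
          (∑ j' ∈ Icc j p, (n (2 * m * j' - m) - n (2 * m * j' - m - 1))) *
            n (2 * m * j - m - 1)
      - ∑ j ∈ Icc 1 (p - 1),
          ((∑ j' ∈ Icc (j + 1) p, (n (2 * m * j' - 1) - n (2 * m * j' - 2 * m)))
            + n (2 * m * j)) * n (2 * m * j - 1)
      - ∑ s ∈ Icc 1 (m - 1), ∑ j ∈ Icc 1 p,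
          ((∑ j' ∈ Icc 1 j, (n (2 * m * j' - m + s) - n (2 * m * j' - m - s)))
            + ∑ j' ∈ Icc (j + 1) p, (n (2 * m * j' - m + s - 1) - n (2 * m * j' - m - s))) *
            n (2 * m * j - m + s - 1) : ℤ) : ℚ)
    + ∑ j ∈ Icc 1 p,
        ((n (2 * m * j - 2 * m + 1) : ℚ) * ((n (2 * m * j - 2 * m + 1) : ℚ) + 1) / 2
          - (n (2 * m * j - 2 * m + 1) : ℚ) * (n (2 * m * j - 2 * m) : ℚ)
          + (n (2 * m * j - m - 1) : ℚ) * ((n (2 * m * j - m - 1) : ℚ) - 1) / 2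
          - (n (2 * m * j - m) : ℚ) * (n (2 * m * j - m - 1) : ℚ)
          + (1 / 2 : ℚ) * ∑ s ∈ Icc 2 (m - 1),
              ((n (2 * m * j - 2 * m + s) : ℚ) - (n (2 * m * j - 2 * m + s - 1) : ℚ)) *
                ((n (2 * m * j - 2 * m + s) : ℚ) - (n (2 * m * j - 2 * m + s - 1) : ℚ) + 1))
    = ((∑ i ∈ (Icc 1 (2 * m * p - 1)).filter (fun i => ¬ m ∣ i),
          ∑ j ∈ Icc (i + 1) (2 * m * p - 1), epsLO m i j * n i * n j
        - ∑ i ∈ Icc 1 (2 * m * p - 2), n i * n (i + 1) : ℤ) : ℚ) := by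
  obtain ⟨M, rfl⟩ : ∃ M, m = M + 1 := ⟨m - 1, by omega⟩
  rw [half_integral_part M p (by omega) n, sum_diff_mul_diff_left, sum_diff_mul_diff_right M p n h0,
    sum_low_part, sum_mid_part, sum_last_part M p hp n h0, sum_high_part, sum_epsLO M p hp,
    sum_consecutive M p hp n h0, ← Int.cast_add]
  congr 1
  simp only [← sum_sub_distrib, ← sum_add_distrib]
  refine sum_congr rfl fun K _ => ?_
  have hoff := sum_congr rfl fun J (_ : J ∈ range K) => off_diagonal_identity M (blockLo M n J)
    (blockHi M n J) (blockLo M n K) (blockHi M n K) (blockHi_mid M n K)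
  have hdiag := diagonal_identity M (blockLo M n K) (blockHi M n K) (blockHi_mid M n K)
  simp only [sum_sub_distrib, sum_add_distrib, sum_range_succ _ K] at hoff hdiag ⊢
  linear_combination hoff + hdiag

end
end

section
/- Let m ≥ 2 and p ≥ 1 be integers and let n_1, …, n_{2mp} be integers, with the convention n_s = 0 for every index s ≤ 0. Then the following expression E': E' = Σ_{k=1}^{m} Σ_{j=1}^{p} Σ_{j'=1}^{j} (n_{2mj−k+1} − n_{2mj−k})(n_{2mj'−2m+k} − n_{2mj'−2m}) − Σ_{s=1}^{m−1} Σ_{j=2}^{p} Σ_{j'=2}^{j} (n_{2mj−m−s+1} − n_{2mj−m−s})(n_{2mj'−2m} − n_{2mj'−3m+s}) + Σ_{j=1}^{p} Σ_{j'=j}^{p} (n_{2mj'} − n_{2mj'−2m+1}) n_{2mj−2m} + Σ_{j=1}^{p} n_{2mj−2m+1} n_{2mj−2m} + Σ_{s=1}^{m−1} Σ_{j=1}^{p} ( Σ_{j'=1}^{j} (n_{2mj'−s} − n_{2mj'−2m+s}) + Σ_{j'=j+1}^{p} (n_{2mj'−s} − n_{2mj'−2m+s+1}) ) n_{2mj−2m+s}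 − Σ_{j=1}^{p} ( Σ_{j'=j}^{p} (n_{2mj'−m+1} − n_{2mj'−m}) ) n_{2mj−m} − Σ_{s=1}^{m−1} Σ_{j=1}^{p} ( Σ_{j'=1}^{j−1} (n_{2mj'−m+s} − n_{2mj'−m−s}) + Σ_{j'=j}^{p} (n_{2mj'−m+s+1} − n_{2mj'−m−s}) ) n_{2mj−m+s} + Σ_{j=1}^{p} [ n_{2mj−2m+1}(n_{2mj−2m+1}+1)/2 − n_{2mj−2m+1} n_{2mj−2m} + n_{2mj−m−1}(n_{2mj−m−1}−1)/2 − n_{2mj−m} n_{2mj−m−1} + (1/2) Σ_{s=2}^{m−1} (n_{2mj−2m+s} − n_{2mj−2m+s−1})(n_{2mj−2m+s} − n_{2mj−2m+s−1} + 1) ] satisfies E' = Σ_{1 ≤ i < j ≤ 2mp, m ∤ i} Δ_{i,j,m} n_i n_j. -/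
open Finset

noncomputable section

/-- The left-hand side of the quadratic identity, with the integer and rational parts merged. -/
def quadExpr (f : ℤ → ℚ) (m p : ℕ) : ℚ :=
  (∑ k ∈ Icc 1 m, ∑ j ∈ Icc 1 p, ∑ j' ∈ Icc 1 j,
        (f (2 * m * j - k + 1) - f (2 * m * j - k)) *
          (f (2 * m * j' - 2 * m + k) - f (2 * m * j' - 2 * m))
      - ∑ s ∈ Icc 1 (m - 1), ∑ j ∈ Icc 2 p, ∑ j' ∈ Icc 2 j,
          (f (2 * m * j - m - s + 1) - f (2 * m * j - m - s)) *
            (f (2 * m * j' - 2 * m) - f (2 * m * j' - 3 * m + s))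
      + ∑ j ∈ Icc 1 p, ∑ j' ∈ Icc j p,
          (f (2 * m * j') - f (2 * m * j' - 2 * m + 1)) * f (2 * m * j - 2 * m)
      + ∑ j ∈ Icc 1 p, f (2 * m * j - 2 * m + 1) * f (2 * m * j - 2 * m)
      + ∑ s ∈ Icc 1 (m - 1), ∑ j ∈ Icc 1 p,
          ((∑ j' ∈ Icc 1 j, (f (2 * m * j' - s) - f (2 * m * j' - 2 * m + s)))
            + ∑ j' ∈ Icc (j + 1) p, (f (2 * m * j' - s) - f (2 * m * j' - 2 * m + s + 1))) *
            f (2 * m * j - 2 * m + s)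
      - ∑ j ∈ Icc 1 p,
          (∑ j' ∈ Icc j p, (f (2 * m * j' - m + 1) - f (2 * m * j' - m))) *
            f (2 * m * j - m)
      - ∑ s ∈ Icc 1 (m - 1), ∑ j ∈ Icc 1 p,
          ((∑ j' ∈ Icc 1 (j - 1), (f (2 * m * j' - m + s) - f (2 * m * j' - m - s)))
            + ∑ j' ∈ Icc j p, (f (2 * m * j' - m + s + 1) - f (2 * m * j' - m - s))) *
            f (2 * m * j - m + s))
    + ∑ j ∈ Icc 1 p,
        (f (2 * m * j - 2 * m + 1) * (f (2 * m * j - 2 * m + 1) + 1) / 2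
          - f (2 * m * j - 2 * m + 1) * f (2 * m * j - 2 * m)
          + f (2 * m * j - m - 1) * (f (2 * m * j - m - 1) - 1) / 2
          - f (2 * m * j - m) * f (2 * m * j - m - 1)
          + (1 / 2 : ℚ) * ∑ s ∈ Icc 2 (m - 1),
              (f (2 * m * j - 2 * m + s) - f (2 * m * j - 2 * m + s - 1)) *
                (f (2 * m * j - 2 * m + s) - f (2 * m * j - 2 * m + s - 1) + 1))

/-- The sum of the entries at offset `a` in the first `p` blocks of length `2 * m`. -/
def blockSum (f : ℤ → ℚ) (m p : ℕ) (a : ℤ) : ℚ :=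
  ∑ j ∈ Icc 1 p, f (2 * m * j - 2 * m + a)

lemma sum_block_succ (f : ℤ → ℚ) (m p : ℕ) (a : ℤ) :
    ∑ j ∈ Icc 1 (p + 1), f (2 * m * j - 2 * m + a) = blockSum f m p a + f (2 * m * p + a) := by
  rw [sum_Icc_succ_top (by omega), blockSum]
  congr 2
  push_cast
  ring

lemma blockSum_zero_add (f : ℤ → ℚ) (m p : ℕ) (h0 : f 0 = 0) :
    blockSum f m p 0 + f (2 * m * p) = blockSum f m p (2 * m) := by
  induction p with
  | zero => simp [blockSum, h0]
  | succ p ih =>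
    have h1 := sum_block_succ f m p 0
    have h2 := sum_block_succ f m p (2 * m)
    rw [blockSum, blockSum, h1, h2, add_zero, ih]
    congr 2

lemma sum_lower_succ (g h : ℕ → ℚ) (p : ℕ) :
    ∑ j ∈ Icc 1 (p + 1), ∑ j' ∈ Icc 1 j, g j * h j' =
      ∑ j ∈ Icc 1 p, ∑ j' ∈ Icc 1 j, g j * h j' + g (p + 1) * ∑ j ∈ Icc 1 (p + 1), h j := by
  rw [sum_Icc_succ_top (by omega), mul_sum]

lemma sum_Icc_two_succ (g : ℕ → ℚ) (p : ℕ) :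
    ∑ j ∈ Icc 2 (p + 1), g j = ∑ j ∈ Icc 1 p, g (j + 1) := by
  induction p with
  | zero => simp
  | succ p ih => rw [sum_Icc_succ_top (by omega), ih, sum_Icc_succ_top (by omega)]

lemma sum_lower_two_succ (g h : ℕ → ℚ) (p : ℕ) :
    ∑ j ∈ Icc 2 (p + 1), ∑ j' ∈ Icc 2 j, g j * h j' =
      ∑ j ∈ Icc 2 p, ∑ j' ∈ Icc 2 j, g j * h j' + g (p + 1) * ∑ j ∈ Icc 1 p, h (j + 1) := by
  rcases Nat.eq_zero_or_pos p with rfl | hp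
  · simp
  · rw [sum_Icc_succ_top (by omega), ← mul_sum, sum_Icc_two_succ]

lemma sum_lower_upper_succ (g g' h : ℕ → ℚ) (p : ℕ) :
    ∑ j ∈ Icc 1 (p + 1), (∑ j' ∈ Icc 1 j, g j' + ∑ j' ∈ Icc (j + 1) (p + 1), g' j') * h j =
      ∑ j ∈ Icc 1 p, (∑ j' ∈ Icc 1 j, g j' + ∑ j' ∈ Icc (j + 1) p, g' j') * h j
        + (∑ j ∈ Icc 1 (p + 1), g j) * h (p + 1) + g' (p + 1) * ∑ j ∈ Icc 1 p, h j := by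
  rw [sum_Icc_succ_top (by omega), mul_sum, Icc_eq_empty (a := p + 1 + 1) (by omega), sum_empty,
    add_zero, add_right_comm, ← sum_add_distrib]
  congr 1
  refine sum_congr rfl fun j hj => ?_
  rw [mem_Icc] at hj
  rw [sum_Icc_succ_top (by omega)]
  ring

lemma sum_strict_lower_upper_succ (g g' h : ℕ → ℚ) (p : ℕ) :
    ∑ j ∈ Icc 1 (p + 1), (∑ j' ∈ Icc 1 (j - 1), g j' + ∑ j' ∈ Icc j (p + 1), g' j') * h j =
      ∑ j ∈ Icc 1 p, (∑ j' ∈ Icc 1 (j - 1), g j' + ∑ j' ∈ Icc j p, g' j') * h j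
        + (∑ j ∈ Icc 1 p, g j) * h (p + 1) + g' (p + 1) * ∑ j ∈ Icc 1 (p + 1), h j := by
  have key : ∑ j ∈ Icc 1 p, (∑ j' ∈ Icc 1 (j - 1), g j' + ∑ j' ∈ Icc j (p + 1), g' j') * h j =
      ∑ j ∈ Icc 1 p, (∑ j' ∈ Icc 1 (j - 1), g j' + ∑ j' ∈ Icc j p, g' j') * h j
        + g' (p + 1) * ∑ j ∈ Icc 1 p, h j := by
    rw [mul_sum, ← sum_add_distrib]
    refine sum_congr rfl fun j hj => ?_
    rw [mem_Icc] at hj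
    rw [sum_Icc_succ_top (by omega)]
    ring
  rw [sum_Icc_succ_top (by omega), key, sum_Icc_succ_top (by omega) h, Icc_self, sum_singleton,
    Nat.add_sub_cancel]
  ring

lemma sum_upper_succ (g h : ℕ → ℚ) (p : ℕ) :
    ∑ j ∈ Icc 1 (p + 1), (∑ j' ∈ Icc j (p + 1), g j') * h j =
      ∑ j ∈ Icc 1 p, (∑ j' ∈ Icc j p, g j') * h j + g (p + 1) * ∑ j ∈ Icc 1 (p + 1), h j := by
  simpa using sum_strict_lower_upper_succ (fun _ => 0) g h p

/-- The increment of `quadExpr` when a block is appended, in terms of the entries `x` of the new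
block and the sums `Y` over the earlier blocks. -/
def quadStep (x Y : ℤ → ℚ) (m : ℕ) : ℚ :=
  ∑ k ∈ Icc 1 m, (x (2 * m - k + 1) - x (2 * m - k)) * (Y k + x k - Y (2 * m))
    - ∑ s ∈ Icc 1 (m - 1), (x (m - s + 1) - x (m - s)) * (Y (2 * m) - Y (m + s))
    + (x (2 * m) - x 1) * Y (2 * m)
    + x 1 * x 0
    + ∑ s ∈ Icc 1 (m - 1), ((Y (2 * m - s) + x (2 * m - s) - (Y s + x s)) * x s
        + (x (2 * m - s) - x (s + 1)) * Y s)
    - (x (m + 1) - x m) * (Y m + x m)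
    - ∑ s ∈ Icc 1 (m - 1), ((Y (m + s) - Y (m - s)) * x (m + s)
        + (x (m + s + 1) - x (m - s)) * (Y (m + s) + x (m + s)))
    + (x 1 * (x 1 + 1) / 2 - x 1 * x 0 + x (m - 1) * (x (m - 1) - 1) / 2 - x m * x (m - 1)
      + (1 / 2 : ℚ) * ∑ s ∈ Icc 2 (m - 1), (x s - x (s - 1)) * (x s - x (s - 1) + 1))

lemma sum_block (f : ℤ → ℚ) (m p : ℕ) (φ : ℕ → ℤ) (a : ℤ)
    (hφ : ∀ j : ℕ, φ j = 2 * m * j - 2 * m + a) :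
    ∑ j ∈ Icc 1 p, f (φ j) = blockSum f m p a :=
  sum_congr rfl fun j _ => by rw [hφ]

lemma sum_block_top (f : ℤ → ℚ) (m p : ℕ) (φ : ℕ → ℤ) (a : ℤ)
    (hφ : ∀ j : ℕ, φ j = 2 * m * j - 2 * m + a) :
    ∑ j ∈ Icc 1 (p + 1), f (φ j) = blockSum f m p a + f (2 * m * p + a) := by
  rw [sum_block f m (p + 1) φ a hφ, blockSum, sum_block_succ]

lemma quadExpr_succ (f : ℤ → ℚ) (m p : ℕ) (h0 : f 0 = 0) :
    quadExpr f m (p + 1) = quadExpr f m p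
      + quadStep (fun b => f (2 * m * p + b)) (blockSum f m p) m := by
  have hS := sum_block f m p
  have hT := sum_block_top f m p
  have hY : blockSum f m p 0 + f (2 * m * p + 0) = blockSum f m p (2 * m) := by
    rw [add_zero, blockSum_zero_add f m p h0]
  have hx : ∀ c a : ℤ, c = 2 * m * (p + 1 : ℕ) - 2 * m + a → f c = f (2 * m * p + a) := by
    rintro c a rfl
    congr 1
    push_cast
    ring
  have hLower : ∀ k : ℕ, ∑ j ∈ Icc 1 (p + 1), ∑ j' ∈ Icc 1 j,
        (f (2 * m * j - k + 1) - f (2 * m * j - k)) *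
          (f (2 * m * j' - 2 * m + k) - f (2 * m * j' - 2 * m)) = _ := fun k => by
    rw [sum_lower_succ (fun j => f (2 * m * j - k + 1) - f (2 * m * j - k))
      (fun j' => f (2 * m * j' - 2 * m + k) - f (2 * m * j' - 2 * m)) p, sum_sub_distrib,
      hT _ k fun j => rfl, hT _ 0 fun j => by ring, hY,
      hx (2 * m * (p + 1 : ℕ) - k + 1) (2 * m - k + 1) (by ring),
      hx (2 * m * (p + 1 : ℕ) - k) (2 * m - k) (by ring)]
  have hLowerTwo : ∀ s : ℕ, ∑ j ∈ Icc 2 (p + 1), ∑ j' ∈ Icc 2 j,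
          (f (2 * m * j - m - s + 1) - f (2 * m * j - m - s)) *
            (f (2 * m * j' - 2 * m) - f (2 * m * j' - 3 * m + s)) = _ := fun s => by
    rw [sum_lower_two_succ (fun j => f (2 * m * j - m - s + 1) - f (2 * m * j - m - s))
      (fun j' => f (2 * m * j' - 2 * m) - f (2 * m * j' - 3 * m + s)) p, sum_sub_distrib,
      hS (fun j => 2 * m * (j + 1 : ℕ) - 2 * m) (2 * m) fun j => by push_cast; ring,
      hS (fun j => 2 * m * (j + 1 : ℕ) - 3 * m + s) (m + s) fun j => by push_cast; ring,
      hx (2 * m * (p + 1 : ℕ) - m - s + 1) (m - s + 1) (by ring),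
      hx (2 * m * (p + 1 : ℕ) - m - s) (m - s) (by ring)]
  have hUpper : ∑ j ∈ Icc 1 (p + 1), ∑ j' ∈ Icc j (p + 1),
          (f (2 * m * j') - f (2 * m * j' - 2 * m + 1)) * f (2 * m * j - 2 * m) =
      ∑ j ∈ Icc 1 p, ∑ j' ∈ Icc j p,
          (f (2 * m * j') - f (2 * m * j' - 2 * m + 1)) * f (2 * m * j - 2 * m)
        + (f (2 * m * p + 2 * m) - f (2 * m * p + 1)) * blockSum f m p (2 * m) := by
    simp_rw [← sum_mul]
    rw [sum_upper_succ (fun j' => f (2 * m * j') - f (2 * m * j' - 2 * m + 1))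
      (fun j => f (2 * m * j - 2 * m)) p, hT _ 0 fun j => by ring, hY,
      hx (2 * m * (p + 1 : ℕ)) (2 * m) (by ring), hx _ 1 rfl]
  have hDiag : ∑ j ∈ Icc 1 (p + 1), f (2 * m * j - 2 * m + 1) * f (2 * m * j - 2 * m) =
      ∑ j ∈ Icc 1 p, f (2 * m * j - 2 * m + 1) * f (2 * m * j - 2 * m)
        + f (2 * m * p + 1) * f (2 * m * p + 0) := by
    rw [sum_Icc_succ_top (by omega), hx _ 1 rfl,
      hx (2 * m * (p + 1 : ℕ) - 2 * m) 0 (by ring)]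
  have hLowerUpper : ∀ s : ℕ, ∑ j ∈ Icc 1 (p + 1),
          ((∑ j' ∈ Icc 1 j, (f (2 * m * j' - s) - f (2 * m * j' - 2 * m + s)))
            + ∑ j' ∈ Icc (j + 1) (p + 1),
                (f (2 * m * j' - s) - f (2 * m * j' - 2 * m + s + 1))) *
            f (2 * m * j - 2 * m + s) = _ := fun s => by
    rw [sum_lower_upper_succ (fun j' => f (2 * m * j' - s) - f (2 * m * j' - 2 * m + s))
      (fun j' => f (2 * m * j' - s) - f (2 * m * j' - 2 * m + s + 1))
      (fun j => f (2 * m * j - 2 * m + s)) p, sum_sub_distrib,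
      hT (fun j => 2 * m * j - s) (2 * m - s) fun j => by ring,
      hT _ s fun j => rfl, hS _ s fun j => rfl,
      hx (2 * m * (p + 1 : ℕ) - s) (2 * m - s) (by ring), hx _ s rfl,
      hx (2 * m * (p + 1 : ℕ) - 2 * m + s + 1) (s + 1) (by ring), add_assoc]
  have hUpperMid : ∑ j ∈ Icc 1 (p + 1),
          (∑ j' ∈ Icc j (p + 1), (f (2 * m * j' - m + 1) - f (2 * m * j' - m))) *
            f (2 * m * j - m) =
      ∑ j ∈ Icc 1 p, (∑ j' ∈ Icc j p, (f (2 * m * j' - m + 1) - f (2 * m * j' - m))) *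
            f (2 * m * j - m)
        + (f (2 * m * p + (m + 1)) - f (2 * m * p + m)) *
            (blockSum f m p m + f (2 * m * p + m)) := by
    rw [sum_upper_succ (fun j' => f (2 * m * j' - m + 1) - f (2 * m * j' - m))
      (fun j => f (2 * m * j - m)) p, hT _ m fun j => by ring,
      hx (2 * m * (p + 1 : ℕ) - m + 1) (m + 1) (by ring),
      hx (2 * m * (p + 1 : ℕ) - m) m (by ring)]
  have hStrictLowerUpper : ∀ s : ℕ, ∑ j ∈ Icc 1 (p + 1),
          ((∑ j' ∈ Icc 1 (j - 1), (f (2 * m * j' - m + s) - f (2 * m * j' - m - s)))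
            + ∑ j' ∈ Icc j (p + 1), (f (2 * m * j' - m + s + 1) - f (2 * m * j' - m - s))) *
            f (2 * m * j - m + s) = _ := fun s => by
    rw [sum_strict_lower_upper_succ
      (fun j' => f (2 * m * j' - m + s) - f (2 * m * j' - m - s))
      (fun j' => f (2 * m * j' - m + s + 1) - f (2 * m * j' - m - s))
      (fun j => f (2 * m * j - m + s)) p, sum_sub_distrib,
      hS (fun j => 2 * m * j - m + s) (m + s) fun j => by ring,
      hS (fun j => 2 * m * j - m - s) (m - s) fun j => by ring,
      hT (fun j => 2 * m * j - m + s) (m + s) fun j => by ring,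
      hx (2 * m * (p + 1 : ℕ) - m + s + 1) (m + s + 1) (by ring),
      hx (2 * m * (p + 1 : ℕ) - m - s) (m - s) (by ring),
      hx (2 * m * (p + 1 : ℕ) - m + s) (m + s) (by ring), add_assoc]
  have hPred : ∀ s : ℕ, f (2 * m * (p + 1 : ℕ) - 2 * m + s - 1) = _ := fun s =>
    hx _ (s - 1) (by ring)
  have hEntry : ∀ s : ℕ, f (2 * m * (p + 1 : ℕ) - 2 * m + s) = _ := fun s => hx _ s rfl
  unfold quadExpr quadStep
  simp_rw [hLower, hLowerTwo, hUpper, hDiag, hLowerUpper, hUpperMid, hStrictLowerUpper]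
  rw [sum_Icc_succ_top (b := p) (by omega) (fun j : ℕ => (_ : ℚ))]
  simp_rw [hPred, hEntry, hx _ 1 rfl, hx (2 * m * (p + 1 : ℕ) - 2 * m) 0 (by ring),
    hx (2 * m * (p + 1 : ℕ) - m - 1) (m - 1) (by ring),
    hx (2 * m * (p + 1 : ℕ) - m) m (by ring), sum_add_distrib]
  ring

lemma sum_Icc_one_add (g : ℕ → ℚ) (N L : ℕ) :
    ∑ j ∈ Icc 1 (N + L), g j = ∑ j ∈ Icc 1 N, g j + ∑ b ∈ Icc 1 L, g (N + b) := by
  induction L with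
  | zero => simp
  | succ L ih =>
    rw [← add_assoc, sum_Icc_succ_top (by omega), ih, sum_Icc_succ_top (by omega) fun b => g (N + b),
      add_assoc, add_assoc]

lemma sum_Icc_one_reflect (g : ℕ → ℚ) (m : ℕ) :
    ∑ s ∈ Icc 1 (m - 1), g (m - s) = ∑ s ∈ Icc 1 (m - 1), g s := by
  have hmem : ∀ s ∈ Icc 1 (m - 1), m - s ∈ Icc 1 (m - 1) := fun s hs => by
    rw [mem_Icc] at hs ⊢
    omega
  have hinv : ∀ s ∈ Icc 1 (m - 1), m - (m - s) = s := fun s hs => by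
    rw [mem_Icc] at hs
    omega
  exact sum_nbij' (fun s => m - s) (fun s => m - s) hmem hmem hinv hinv fun _ _ => rfl

lemma sum_Icc_two_mul (g : ℕ → ℚ) (m : ℕ) (hm : 0 < m) (h1 : g m = 0) (h2 : g (2 * m) = 0) :
    ∑ a ∈ Icc 1 (2 * m), g a = ∑ s ∈ Icc 1 (m - 1), (g s + g (2 * m - s)) := by
  have hpred : ∀ h : ℕ → ℚ, h m = 0 → ∑ a ∈ Icc 1 m, h a = ∑ a ∈ Icc 1 (m - 1), h a := by
    intro h hh
    obtain ⟨k, rfl⟩ : ∃ k, m = k + 1 := ⟨m - 1, by omega⟩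
    rw [sum_Icc_succ_top (by omega), hh, add_zero, Nat.add_sub_cancel]
  rw [two_mul] at h2 ⊢
  rw [sum_Icc_one_add, hpred g h1, hpred (fun b => g (m + b)) h2, sum_add_distrib,
    ← sum_Icc_one_reflect (fun b => g (m + b))]
  congr 1
  refine sum_congr rfl fun s hs => ?_
  rw [mem_Icc] at hs
  congr 1
  omega

lemma deltaLO_add_mul_right (m q i j : ℕ) (hi : 0 < i) :
    deltaLO m i (2 * m * q + j) = deltaLO m i j := by
  have e1 : i + (2 * m * q + j) = 2 * m * q + (i + j) := by ring
  have e2 : 2 * m * q + (i + j) - 1 = 2 * m * q + (i + j - 1) := by omega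
  have e3 : ((2 * m * q + j : ℕ) : ℤ) - i = j - i + 2 * m * q := by push_cast; ring
  have e4 : (j : ℤ) - i + 2 * m * q - 1 = j - i - 1 + 2 * m * q := by ring
  have hd : (2 * m : ℤ) ∣ 2 * m * q := dvd_mul_right _ _
  simp only [deltaLO, e1, e2, e3, e4, dvd_add_left hd, Nat.dvd_add_right (dvd_mul_right (2 * m) q)]

lemma deltaLO_add_mul_left (m q i j : ℕ) (hi : 0 < i) :
    deltaLO m (2 * m * q + i) j = deltaLO m i j := by
  have e1 : 2 * m * q + i + j = 2 * m * q + (i + j) := by ring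
  have e2 : 2 * m * q + (i + j) - 1 = 2 * m * q + (i + j - 1) := by omega
  have e3 : (j : ℤ) - (2 * m * q + i : ℕ) = j - i - 2 * m * q := by push_cast; ring
  have e4 : (j : ℤ) - i - 2 * m * q - 1 = j - i - 1 - 2 * m * q := by ring
  have hd : (2 * m : ℤ) ∣ 2 * m * q := dvd_mul_right _ _
  have hd' : m ∣ 2 * m * q := ⟨2 * q, by ring⟩
  simp only [deltaLO, e1, e2, e3, e4, dvd_sub_left hd, Nat.dvd_add_right (dvd_mul_right (2 * m) q),
    Nat.dvd_add_right hd']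

lemma deltaLO_of_dvd (m i j : ℕ) (h : m ∣ i) : deltaLO m i j = 0 := if_pos h

lemma Nat.dvd_iff_eq_of_lt_two_mul {d k : ℕ} (h0 : 0 < k) (h : k < 2 * d) : d ∣ k ↔ k = d := by
  constructor
  · rintro ⟨c, rfl⟩
    have hc : c < 2 := by nlinarith
    interval_cases c <;> simp_all
  · rintro rfl
    exact dvd_rfl

lemma Int.dvd_iff_eq_zero_of_abs_lt {d k : ℤ} (h : |k| < d) : d ∣ k ↔ k = 0 :=
  ⟨fun hd => Int.eq_zero_of_abs_lt_dvd hd h, fun hk => hk ▸ dvd_zero d⟩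

lemma deltaLO_eq (m a b : ℕ) (ha : 0 < a) (ham : a ≠ m) (ha' : a < 2 * m)
    (hb : 0 < b) (hb' : b ≤ 2 * m) :
    deltaLO m a b = (if b = 2 * m - a then 1 else 0) + (if b = 2 * m - a + 1 then 1 else 0)
      - (if b = a then 1 else 0) - (if b = a + 1 then 1 else 0) := by
  have h1 : 2 * m ∣ a + b ↔ a + b = 2 * m :=
    Nat.dvd_iff_eq_of_lt_two_mul (by omega) (by omega)
  have h2 : 2 * m ∣ a + b - 1 ↔ a + b - 1 = 2 * m :=
    Nat.dvd_iff_eq_of_lt_two_mul (by omega) (by omega)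
  have h3 : (2 * m : ℤ) ∣ b - a ↔ (b - a : ℤ) = 0 :=
    Int.dvd_iff_eq_zero_of_abs_lt (by rw [abs_lt]; omega)
  have h4 : (2 * m : ℤ) ∣ b - a - 1 ↔ (b - a - 1 : ℤ) = 0 :=
    Int.dvd_iff_eq_zero_of_abs_lt (by rw [abs_lt]; omega)
  simp only [deltaLO, Nat.dvd_iff_eq_of_lt_two_mul ha ha', if_neg ham, h1, h2, h3, h4]
  split_ifs <;> omega

lemma sum_deltaLO_mul (m a c : ℕ) (x : ℤ → ℚ) (ha : 0 < a) (ham : a ≠ m) (ha' : a < 2 * m)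
    (hc : 0 < c) :
    ∑ b ∈ Icc c (2 * m), (deltaLO m a b : ℚ) * x b =
      (if c ≤ 2 * m - a then x (2 * m - a) else 0)
        + (if c ≤ 2 * m - a + 1 then x (2 * m - a + 1) else 0)
        - (if c ≤ a then x a else 0) - (if c ≤ a + 1 then x (a + 1) else 0) := by
  have hcast : ((2 * m - a : ℕ) : ℤ) = 2 * m - a := by omega
  have h : ∀ b ∈ Icc c (2 * m), (deltaLO m a b : ℚ) * x b =
      (if b = 2 * m - a then x b else 0) + (if b = 2 * m - a + 1 then x b else 0)
        - (if b = a then x b else 0) - (if b = a + 1 then x b else 0) := by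
    intro b hb
    rw [mem_Icc] at hb
    rw [deltaLO_eq m a b ha ham ha' (by omega) hb.2]
    push_cast
    simp only [sub_mul, add_mul, ite_mul, one_mul, zero_mul]
  rw [sum_congr rfl h]
  simp only [sum_sub_distrib, sum_add_distrib, sum_ite_eq', mem_Icc]
  have h1 : 2 * m - a ≤ 2 * m := by omega
  have h2 : 2 * m - a + 1 ≤ 2 * m := by omega
  have h3 : a + 1 ≤ 2 * m := by omega
  simp only [h1, h2, h3, ha'.le, and_true, Nat.cast_add, hcast, Nat.cast_one]

/-- The right-hand side of the quadratic identity, summed over the larger index first. -/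
def pairSum (f : ℤ → ℚ) (m p : ℕ) : ℚ :=
  ∑ j ∈ Icc 1 (2 * m * p), ∑ i ∈ Icc 1 (j - 1), (deltaLO m i j : ℚ) * f i * f j

lemma sum_deltaLO_mul_blocks (f : ℤ → ℚ) (m p b : ℕ) :
    ∑ i ∈ Icc 1 (2 * m * p), (deltaLO m i b : ℚ) * f i =
      ∑ a ∈ Icc 1 (2 * m), (deltaLO m a b : ℚ) * blockSum f m p a := by
  induction p with
  | zero => simp [blockSum]
  | succ p ih =>
    rw [mul_add, mul_one, sum_Icc_one_add, ih, ← sum_add_distrib]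
    refine sum_congr rfl fun a ha => ?_
    rw [mem_Icc] at ha
    rw [deltaLO_add_mul_left m p a b (by omega), ← mul_add,
      show blockSum f m (p + 1) a = _ from sum_block_succ f m p a]
    push_cast
    rfl

/-- The increment of `pairSum` when a block is appended. -/
def pairStep (x Y : ℤ → ℚ) (m : ℕ) : ℚ :=
  ∑ s ∈ Icc 1 (m - 1),
    (Y s * (x (2 * m - s) + x (2 * m - s + 1) - x s - x (s + 1))
      + Y (2 * m - s) * (x s + x (s + 1) - x (2 * m - s) - x (2 * m - s + 1))
      + x s * (x (2 * m - s) + x (2 * m - s + 1) - x (s + 1)) - x (2 * m - s) * x (2 * m - s + 1))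

lemma sum_deltaLO_eq_pairStep (x Y : ℤ → ℚ) (m : ℕ) (hm : 0 < m) :
    ∑ b ∈ Icc 1 (2 * m), (∑ a ∈ Icc 1 (2 * m), (deltaLO m a b : ℚ) * Y a * x b
      + ∑ a ∈ Icc 1 (b - 1), (deltaLO m a b : ℚ) * x a * x b) = pairStep x Y m := by
  have hswap : ∑ b ∈ Icc 1 (2 * m), ∑ a ∈ Icc 1 (b - 1), (deltaLO m a b : ℚ) * x a * x b =
      ∑ a ∈ Icc 1 (2 * m), ∑ b ∈ Icc (a + 1) (2 * m), (deltaLO m a b : ℚ) * x a * x b :=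
    sum_comm' fun b a => by simp only [mem_Icc]; omega
  rw [sum_add_distrib, sum_comm, hswap, ← sum_add_distrib]
  have h : ∀ a : ℕ, ∑ b ∈ Icc 1 (2 * m), (deltaLO m a b : ℚ) * Y a * x b
      + ∑ b ∈ Icc (a + 1) (2 * m), (deltaLO m a b : ℚ) * x a * x b =
      Y a * ∑ b ∈ Icc 1 (2 * m), (deltaLO m a b : ℚ) * x b
      + x a * ∑ b ∈ Icc (a + 1) (2 * m), (deltaLO m a b : ℚ) * x b := by
    intro a
    rw [mul_sum, mul_sum]
    congr 1 <;> exact sum_congr rfl fun b _ => by ring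
  simp_rw [h]
  rw [sum_Icc_two_mul _ m hm (by simp [deltaLO_of_dvd]) (by simp [deltaLO_of_dvd]), pairStep]
  refine sum_congr rfl fun s hs => ?_
  rw [mem_Icc] at hs
  have hcast : ((2 * m - s : ℕ) : ℤ) = 2 * m - s := by omega
  have h1 := sum_deltaLO_mul m s 1 x (by omega) (by omega) (by omega) (by omega)
  have h2 := sum_deltaLO_mul m s (s + 1) x (by omega) (by omega) (by omega) (by omega)
  have h3 := sum_deltaLO_mul m (2 * m - s) 1 x (by omega) (by omega) (by omega) (by omega)
  have h4 := sum_deltaLO_mul m (2 * m - s) (2 * m - s + 1) x (by omega) (by omega) (by omega)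
    (by omega)
  rw [if_pos (by omega), if_pos (by omega), if_pos (by omega), if_pos (by omega)] at h1 h3
  rw [if_pos (by omega), if_pos (by omega), if_neg (by omega), if_pos (by omega)] at h2
  rw [if_neg (by omega), if_neg (by omega), if_neg (by omega), if_pos (by omega)] at h4
  rw [h1, h2, h3, h4, hcast, sub_sub_cancel]
  ring

lemma pairSum_succ (f : ℤ → ℚ) (m p : ℕ) (hm : 0 < m) :
    pairSum f m (p + 1) = pairSum f m p
      + pairStep (fun b => f (2 * m * p + b)) (blockSum f m p) m := by
  rw [← sum_deltaLO_eq_pairStep _ _ m hm, pairSum, mul_add, mul_one, sum_Icc_one_add, pairSum]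
  congr 1
  refine sum_congr rfl fun b hb => ?_
  rw [mem_Icc] at hb
  rw [Nat.add_sub_assoc hb.1, sum_Icc_one_add]
  congr 1
  · rw [← sum_mul, ← sum_mul, ← sum_deltaLO_mul_blocks]
    push_cast
    congr 1
    refine sum_congr rfl fun i hi => ?_
    rw [mem_Icc] at hi
    rw [deltaLO_add_mul_right m p i b (by omega)]
  · refine sum_congr rfl fun a ha => ?_
    rw [mem_Icc] at ha
    rw [deltaLO_add_mul_right m p _ b (by omega), deltaLO_add_mul_left m p a b (by omega)]
    push_cast
    rfl

lemma sum_Icc_telescope_s19 (g : ℤ → ℚ) (M : ℕ) :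
    ∑ s ∈ Icc 1 M, (g (s + 1) - g s) = g (M + 1) - g 1 := by
  induction M with
  | zero => simp
  | succ M ih =>
    rw [sum_Icc_succ_top (by omega), ih]
    push_cast
    ring

lemma quadStep_eq_pairStep (x Y : ℤ → ℚ) (m : ℕ) (hm : 2 ≤ m) :
    quadStep x Y m = pairStep x Y m := by
  obtain ⟨M, rfl⟩ : ∃ M, m = M + 1 + 1 := ⟨m - 2, by omega⟩
  have hrefl : ∀ g : ℤ → ℚ, ∑ s ∈ Icc 1 (M + 1), g (((M + 1 + 1 : ℕ) : ℤ) - s) =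
      ∑ s ∈ Icc 1 (M + 1), g s := fun g => by
    refine Eq.trans ?_ (sum_Icc_one_reflect (fun s => g s) (M + 1 + 1))
    refine sum_congr rfl fun s hs => ?_
    rw [mem_Icc] at hs
    rw [Nat.cast_sub (by omega)]
  set m := M + 1 + 1 with hmdef
  have hReflLower : ∑ s ∈ Icc 1 (M + 1), (x (m - s + 1) - x (m - s)) * (Y (2 * m) - Y (m + s)) =
      ∑ s ∈ Icc 1 (M + 1), (x (s + 1) - x s) * (Y (2 * m) - Y (2 * m - s)) := by
    rw [← hrefl fun s => (x (s + 1) - x s) * (Y (2 * m) - Y (2 * m - s))]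
    refine sum_congr rfl fun s _ => ?_
    rw [show (2 * m - (m - s) : ℤ) = m + s by ring]
  have hReflUpper : ∑ s ∈ Icc 1 (M + 1), ((Y (m + s) - Y (m - s)) * x (m + s)
        + (x (m + s + 1) - x (m - s)) * (Y (m + s) + x (m + s))) =
      ∑ s ∈ Icc 1 (M + 1), ((Y (2 * m - s) - Y s) * x (2 * m - s)
        + (x (2 * m - s + 1) - x s) * (Y (2 * m - s) + x (2 * m - s))) := by
    rw [← hrefl fun s => (Y (2 * m - s) - Y s) * x (2 * m - s)
        + (x (2 * m - s + 1) - x s) * (Y (2 * m - s) + x (2 * m - s))]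
    refine sum_congr rfl fun s _ => ?_
    rw [show (2 * m - (m - s) : ℤ) = m + s by ring]
  have hShift : ∑ s ∈ Icc 2 (M + 1), (x s - x (s - 1)) * (x s - x (s - 1) + 1) =
      ∑ s ∈ Icc 1 (M + 1), (x (s + 1) - x s) * (x (s + 1) - x s + 1)
        - (x m - x (m - 1)) * (x m - x (m - 1) + 1) := by
    rw [sum_Icc_two_succ fun s : ℕ => (x s - x (s - 1)) * (x s - x (s - 1) + 1),
      sum_Icc_succ_top (by omega)]
    simp [hmdef]
  have t1 := sum_Icc_telescope_s19 (fun s => x s * (x s + 1) / 2 - x s * Y (2 * m)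
    + x (2 * m - s + 1) * Y (2 * m)) (M + 1)
  have hM : ((M + 1 : ℕ) : ℤ) + 1 = m := by simp [hmdef]
  have hMm : m - 1 = M + 1 := by omega
  rw [hM] at t1
  have key : ∑ k ∈ Icc 1 (M + 1), (x (2 * m - k + 1) - x (2 * m - k)) * (Y k + x k - Y (2 * m))
      - ∑ s ∈ Icc 1 (M + 1), (x (s + 1) - x s) * (Y (2 * m) - Y (2 * m - s))
      + ∑ s ∈ Icc 1 (M + 1), ((Y (2 * m - s) + x (2 * m - s) - (Y s + x s)) * x s
        + (x (2 * m - s) - x (s + 1)) * Y s)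
      - ∑ s ∈ Icc 1 (M + 1), ((Y (2 * m - s) - Y s) * x (2 * m - s)
        + (x (2 * m - s + 1) - x s) * (Y (2 * m - s) + x (2 * m - s)))
      + (1 / 2 : ℚ) * ∑ s ∈ Icc 1 (M + 1), (x (s + 1) - x s) * (x (s + 1) - x s + 1) =
      ∑ s ∈ Icc 1 (M + 1),
        (Y s * (x (2 * m - s) + x (2 * m - s + 1) - x s - x (s + 1))
        + Y (2 * m - s) * (x s + x (s + 1) - x (2 * m - s) - x (2 * m - s + 1))
        + x s * (x (2 * m - s) + x (2 * m - s + 1) - x (s + 1))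
        - x (2 * m - s) * x (2 * m - s + 1))
      + (x m * (x m + 1) / 2 - x m * Y (2 * m) + x (2 * m - m + 1) * Y (2 * m)
        - (x 1 * (x 1 + 1) / 2 - x 1 * Y (2 * m) + x (2 * m - 1 + 1) * Y (2 * m))) := by
    rw [← t1, mul_sum, ← sum_sub_distrib, ← sum_add_distrib, ← sum_sub_distrib, ← sum_add_distrib,
      ← sum_add_distrib]
    refine sum_congr rfl fun s _ => ?_
    rw [show (2 * m - (s + 1) + 1 : ℤ) = 2 * m - s by ring]
    ring
  rw [show (2 * m - m + 1 : ℤ) = m + 1 by ring, sub_add_cancel] at key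
  rw [quadStep, pairStep, hMm, hReflLower, hReflUpper, hShift, hmdef, sum_Icc_succ_top (by omega), ← hmdef,
    show (2 * m - m + 1 : ℤ) = m + 1 by ring, show (2 * m - m : ℤ) = m by ring]
  linear_combination key

lemma quadExpr_eq_pairSum (f : ℤ → ℚ) (m p : ℕ) (hm : 2 ≤ m) (h0 : f 0 = 0) :
    quadExpr f m p = pairSum f m p := by
  induction p with
  | zero => simp [quadExpr, pairSum]
  | succ p ih =>
    rw [quadExpr_succ f m p h0, pairSum_succ f m p (by omega), ih,
      quadStep_eq_pairStep _ _ m hm]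

lemma pairSum_eq_filter_sum (f : ℤ → ℚ) (m p : ℕ) :
    pairSum f m p = ∑ i ∈ (Icc 1 (2 * m * p)).filter (fun i => ¬ m ∣ i),
      ∑ j ∈ Icc (i + 1) (2 * m * p), (deltaLO m i j : ℚ) * f i * f j := by
  have hswap : pairSum f m p = ∑ i ∈ Icc 1 (2 * m * p), ∑ j ∈ Icc (i + 1) (2 * m * p),
      (deltaLO m i j : ℚ) * f i * f j :=
    sum_comm' fun j i => by simp only [mem_Icc]; omega
  rw [hswap, sum_filter]
  refine sum_congr rfl fun i _ => ?_
  by_cases h : m ∣ i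
  · simp [h, deltaLO_of_dvd m i _ h]
  · rw [if_pos h]

/-- The key quadratic identity (3.32) = (3.33) in the proof of Theorem 1.2. -/
theorem quadratic_identity_neg_pos
    (m p : ℕ) (hm : 2 ≤ m) (hp : 0 < p) (n : ℤ → ℤ)
    (h0 : ∀ s : ℤ, s ≤ 0 → n s = 0) :
    ((∑ k ∈ Icc 1 m, ∑ j ∈ Icc 1 p, ∑ j' ∈ Icc 1 j,
        (n (2 * m * j - k + 1) - n (2 * m * j - k)) *
          (n (2 * m * j' - 2 * m + k) - n (2 * m * j' - 2 * m))
      - ∑ s ∈ Icc 1 (m - 1), ∑ j ∈ Icc 2 p, ∑ j' ∈ Icc 2 j,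
          (n (2 * m * j - m - s + 1) - n (2 * m * j - m - s)) *
            (n (2 * m * j' - 2 * m) - n (2 * m * j' - 3 * m + s))
      + ∑ j ∈ Icc 1 p, ∑ j' ∈ Icc j p,
          (n (2 * m * j') - n (2 * m * j' - 2 * m + 1)) * n (2 * m * j - 2 * m)
      + ∑ j ∈ Icc 1 p, n (2 * m * j - 2 * m + 1) * n (2 * m * j - 2 * m)
      + ∑ s ∈ Icc 1 (m - 1), ∑ j ∈ Icc 1 p,
          ((∑ j' ∈ Icc 1 j, (n (2 * m * j' - s) - n (2 * m * j' - 2 * m + s)))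
            + ∑ j' ∈ Icc (j + 1) p, (n (2 * m * j' - s) - n (2 * m * j' - 2 * m + s + 1))) *
            n (2 * m * j - 2 * m + s)
      - ∑ j ∈ Icc 1 p,
          (∑ j' ∈ Icc j p, (n (2 * m * j' - m + 1) - n (2 * m * j' - m))) *
            n (2 * m * j - m)
      - ∑ s ∈ Icc 1 (m - 1), ∑ j ∈ Icc 1 p,
          ((∑ j' ∈ Icc 1 (j - 1), (n (2 * m * j' - m + s) - n (2 * m * j' - m - s)))
            + ∑ j' ∈ Icc j p, (n (2 * m * j' - m + s + 1) - n (2 * m * j' - m - s))) *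
            n (2 * m * j - m + s) : ℤ) : ℚ)
    + ∑ j ∈ Icc 1 p,
        ((n (2 * m * j - 2 * m + 1) : ℚ) * ((n (2 * m * j - 2 * m + 1) : ℚ) + 1) / 2
          - (n (2 * m * j - 2 * m + 1) : ℚ) * (n (2 * m * j - 2 * m) : ℚ)
          + (n (2 * m * j - m - 1) : ℚ) * ((n (2 * m * j - m - 1) : ℚ) - 1) / 2
          - (n (2 * m * j - m) : ℚ) * (n (2 * m * j - m - 1) : ℚ)
          + (1 / 2 : ℚ) * ∑ s ∈ Icc 2 (m - 1),
              ((n (2 * m * j - 2 * m + s) : ℚ) - (n (2 * m * j - 2 * m + s - 1) : ℚ)) *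
                ((n (2 * m * j - 2 * m + s) : ℚ) - (n (2 * m * j - 2 * m + s - 1) : ℚ) + 1))
    = ((∑ i ∈ (Icc 1 (2 * m * p)).filter (fun i => ¬ m ∣ i),
          ∑ j ∈ Icc (i + 1) (2 * m * p), deltaLO m i j * n i * n j : ℤ) : ℚ) := by
  have h := quadExpr_eq_pairSum (fun s => (n s : ℚ)) m p hm (by simp [h0 0 le_rfl])
  rw [pairSum_eq_filter_sum, quadExpr] at h
  push_cast
  exact h

end
end
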